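/- Let N be a positive even integer and h ∈ (1/N)ℤ. Then for all τ ∈ H, τ^{-1/2} · ϑ̃_{N,h}(−1/τ) = (e(1/8)/N) · ∑_{j=0}^{N²−1} e(h·j/N) · ϑ̃_{N, j/N}(τ), where τ^{-1/2} is the principal branch and j/N runs over a set of representatives of the cosets (1/N)ℤ / Nℤ. -/

import Mathlib

open Complex MeasureTheory
open scoped Classical

noncomputable section

/-- `e(a) = exp(2πia)`. -/
def e (a : ℂ) : ℂ := Complex.exp (2 * (Real.pi : ℂ) * Complex.I * a)

/-- The Fourier transform `F(g)(x) = ∫ g(w) e(wx) dw`. -/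
def fourierT (g : ℝ → ℂ) (x : ℝ) : ℂ := ∫ w : ℝ, g w * e ((w * x : ℝ))

/-- The operator `E_σ(f)(x) = e(x²σ/2) ∫_0^x e(-w²σ/2) f(w) dw`. -/
def Eop (σ : ℂ) (f : ℝ → ℂ) (x : ℝ) : ℂ :=
  e ((x : ℂ)^2 * σ / 2) * ∫ w in (0:ℝ)..x, e (-(w : ℂ)^2 * σ / 2) * f w

/-- `ω_τ(x) = e(-x²τ/2) ∑_{m ∈ ℤ+1/2, m ≥ |x|} e(m²τ/2 + m/2)`. -/
def omega (τ : ℂ) (x : ℝ) : ℂ :=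
  e (-(x : ℂ)^2 * τ / 2) *
    ∑' m : ℤ, if |x| ≤ (m : ℝ) + 1/2 then
      e (((m : ℂ) + 1/2)^2 / 2 * τ + ((m : ℂ) + 1/2) / 2) else 0

/-- `η³(τ) = -i ∑_{m ∈ ℤ+1/2} m e(m²τ/2 + m/2)`. -/
def eta3 (τ : ℂ) : ℂ :=
  -Complex.I * ∑' m : ℤ, ((m : ℂ) + 1/2) * e (((m : ℂ) + 1/2)^2 / 2 * τ + ((m : ℂ) + 1/2) / 2)

/-- The complementary error function. -/
def erfc (x : ℝ) : ℝ := (2 / Real.sqrt Real.pi) * ∫ t in Set.Ioi x, Real.exp (-t^2)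

/-- `g⁺_τ`. -/
def gplus (τ : ℂ) (x : ℝ) : ℂ :=
  e (-(x : ℂ)^2 * τ / 2) * ((Real.sign x : ℂ) / (Complex.I * eta3 τ)) *
    ∑' m : ℤ, if |x| < (m : ℝ) + 1/2 then
      (((m : ℝ) + 1/2 - |x| : ℝ) : ℂ) * e (((m : ℂ) + 1/2)^2 / 2 * τ + ((m : ℂ) + 1/2) / 2)
    else 0

/-- `g*_τ`. -/
def gstar (τ : ℂ) (x : ℝ) : ℂ :=
  e (-(x : ℂ)^2 * τ / 2) * ((Real.sign x : ℂ) / 2) *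
    (erfc (Real.sqrt (2 * Real.pi * τ.im) * |x|) : ℂ)

/-- `g_τ = g⁺_τ - g*_τ`. -/
def gfun (τ : ℂ) (x : ℝ) : ℂ := gplus τ x - gstar τ x

/-- The operator `ξ_k f = 2i v^k conj(∂f/∂τ̄)`, with `∂/∂τ̄ = (1/2)(∂/∂u + i ∂/∂v)`. -/
def xi (k : ℝ) (f : ℂ → ℂ) (τ : ℂ) : ℂ :=
  2 * Complex.I * ((τ.im ^ k : ℝ) : ℂ) *
    (starRingEnd ℂ) ((1/2 : ℂ) * (fderiv ℝ f τ 1 + Complex.I * fderiv ℝ f τ Complex.I))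

/-- Sum of divisors function `σ₁`. -/
def sigma1 (n : ℕ) : ℕ := ∑ d ∈ Nat.divisors n, d

/-- The weight 2 Eisenstein series `E₂`. -/
def E2 (τ : ℂ) : ℂ := 1 - 24 * ∑' n : ℕ, (sigma1 (n+1) : ℂ) * e ((n + 1 : ℂ) * τ)

/-- `ϑ̃_{N,h}`. -/
def tvtheta (N : ℕ) (h : ℝ) (τ : ℂ) : ℂ :=
  (if ∃ m : ℤ, h = (m : ℝ) + 1/2 then
      e ((h : ℂ) / 2) * E2 τ / (12 * (N : ℂ) * Complex.I * eta3 τ) else 0)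
  + ∑' n : ℤ, gfun τ ((N : ℝ) * n + h)

/-- The Schwartz function `φ_τ(x,y) = √(2v)·x·e(x²τ/2 - y²τ̄/2)`. -/
def Phi (τ : ℂ) (x y : ℝ) : ℂ :=
  (Real.sqrt (2 * τ.im) : ℂ) * (x : ℂ) *
    e ((x : ℂ)^2 * τ / 2 - (y : ℂ)^2 * (starRingEnd ℂ) τ / 2)

/-- The signature (1,1) bilinear form `B((a₁,a₂),(b₁,b₂)) = a₁b₂ + a₂b₁`. -/
def Bform (a b : ℝ × ℝ) : ℝ := a.1 * b.2 + a.2 * b.1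

/-- `Z⁺_t = (t/√2, t⁻¹/√2)`. -/
def Zp (t : ℝ) : ℝ × ℝ := (t / Real.sqrt 2, t⁻¹ / Real.sqrt 2)

/-- `Z⁻_t = (t/√2, -t⁻¹/√2)`. -/
def Zm (t : ℝ) : ℝ × ℝ := (t / Real.sqrt 2, -t⁻¹ / Real.sqrt 2)

end


noncomputable def tvW (τ : ℂ) (m : ℤ) : ℂ := e (((m : ℂ) + 1/2)^2 / 2 * τ + ((m : ℂ) + 1/2) / 2)

lemma tv_e_add (a b : ℂ) : e (a + b) = e a * e b := by
  simp only [e]; rw [← Complex.exp_add]; ring_nf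

lemma tv_e_zero : e 0 = 1 := by simp [e]

lemma tv_e_int (n : ℤ) : e (n : ℂ) = 1 := by
  simp only [e]
  rw [show 2 * (Real.pi : ℂ) * I * n = n * (2 * Real.pi * I) by ring]
  exact Complex.exp_int_mul_two_pi_mul_I n

lemma tv_e_ne (a : ℂ) : e a ≠ 0 := Complex.exp_ne_zero _

lemma tv_e_norm (a : ℂ) : ‖e a‖ = Real.exp (-2 * Real.pi * a.im) := by
  simp only [e, Complex.norm_exp]
  congr 1
  simp

lemma tv_e_half : e (1/2) = -1 := by
  simp only [e]
  rw [show 2 * (Real.pi : ℂ) * I * (1/2) = Real.pi * I by ring]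
  exact Complex.exp_pi_mul_I

lemma tvW_eq (τ : ℂ) (m : ℤ) :
    tvW τ m = e (τ/8 + 1/4) * jacobiTheta₂_term m (τ/2 + 1/2) τ := by
  simp only [tvW, e, jacobiTheta₂_term]
  rw [← Complex.exp_add]; congr 1; ring

lemma tvW_neg (τ : ℂ) (m : ℤ) : tvW τ (-1 - m) = - tvW τ m := by
  simp only [tvW]
  have : (((-1 - m : ℤ) : ℂ) + 1/2)^2 / 2 * τ + (((-1 - m : ℤ) : ℂ) + 1/2) / 2
      = (((m : ℂ) + 1/2)^2 / 2 * τ + ((m : ℂ) + 1/2) / 2) + (-1/2 + (((-m : ℤ) : ℂ))) := by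
    push_cast; ring
  rw [this, tv_e_add, tv_e_add _ ((-m : ℤ) : ℂ), tv_e_int]
  have : e (-1/2) = -1 := by
    have h : e (1/2 + (-1/2)) = 1 := by norm_num [tv_e_zero]
    rw [tv_e_add, tv_e_half] at h
    linear_combination -h
  rw [this]; ring

lemma tvW_norm (τ : ℂ) (m : ℤ) :
    ‖tvW τ m‖ = Real.exp (-Real.pi * τ.im * ((m : ℝ) + 1/2)^2) := by
  rw [tvW, tv_e_norm]
  congr 1
  have : (((m : ℂ) + 1/2)^2 / 2 * τ + ((m : ℂ) + 1/2) / 2)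
     = ((((m : ℝ) + 1/2)^2 / 2 : ℝ) : ℂ) * τ + ((((m : ℝ) + 1/2)/2 : ℝ) : ℂ) := by push_cast; ring
  rw [this, Complex.add_im, Complex.re_ofReal_mul |> fun _ => Complex.im_ofReal_mul _ _, Complex.ofReal_im]
  ring

lemma tvW_summable {τ : ℂ} (hτ : 0 < τ.im) : Summable (tvW τ) := by
  have := (hasSum_jacobiTheta₂_term (τ/2+1/2) hτ).summable.mul_left (e (τ/8 + 1/4))
  simpa only [← tvW_eq] using this

lemma tvW_summable_mul {τ : ℂ} (hτ : 0 < τ.im) :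
    Summable (fun m : ℤ => ((m : ℂ) + 1/2) * tvW τ m) := by
  have h1 := ((hasSum_jacobiTheta₂'_term (τ/2+1/2) hτ).summable.mul_left
    (e (τ/8 + 1/4) / (2 * Real.pi * I)))
  refine (h1.add ((tvW_summable hτ).mul_left (1/2))).congr ?_
  intro m
  have : (Real.pi : ℂ) ≠ 0 := by exact_mod_cast Real.pi_ne_zero
  rw [jacobiTheta₂'_term, tvW_eq]
  field_simp

lemma tv_tsum_reflect (f : ℤ → ℂ) : ∑' m : ℤ, f (-1 - m) = ∑' m : ℤ, f m :=
  (Equiv.subLeft (-1 : ℤ)).tsum_eq f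

lemma tvW_tsum (τ : ℂ) : ∑' m : ℤ, tvW τ m = 0 := by
  have := tv_tsum_reflect (tvW τ)
  simp only [tvW_neg, tsum_neg] at this
  linear_combination (-1/2) * this

lemma tv_I_eta3 (τ : ℂ) : I * eta3 τ = ∑' m : ℤ, ((m : ℂ) + 1/2) * tvW τ m := by
  rw [eta3, ← mul_assoc]; simp [tvW]

lemma tv_theta_zero {τ : ℂ} : jacobiTheta₂ (τ/2+1/2) τ = 0 := by
  have := tvW_tsum τ
  simp only [tvW_eq, tsum_mul_left] at this
  exact (mul_eq_zero.mp this).resolve_left (tv_e_ne _)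

lemma tv_eta3_theta {τ : ℂ} (hτ : 0 < τ.im) :
    eta3 τ = - e (τ/8+1/4) / (2 * Real.pi) * jacobiTheta₂' (τ/2+1/2) τ := by
  have hpi : (Real.pi : ℂ) ≠ 0 := by exact_mod_cast Real.pi_ne_zero
  have h1 := (hasSum_jacobiTheta₂'_term (τ/2+1/2) hτ).mul_left
    (e (τ/8 + 1/4) / (2 * Real.pi * I))
  have h2 := h1.add ((tvW_summable hτ).hasSum.mul_left (1/2))
  rw [tvW_tsum] at h2
  have h3 : I * eta3 τ = e (τ/8 + 1/4) / (2 * Real.pi * I) * jacobiTheta₂' (τ/2+1/2) τ := by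
    rw [tv_I_eta3, ← add_zero (_ * jacobiTheta₂' _ _), ← mul_zero (1/2 : ℂ), ← h2.tsum_eq]
    refine tsum_congr fun m => ?_
    rw [jacobiTheta₂'_term, tvW_eq]
    field_simp
  have : eta3 τ = -I * (I * eta3 τ) := by rw [← mul_assoc]; simp
  rw [this, h3]; field_simp

lemma tv_im_S {τ : ℂ} (hτ : 0 < τ.im) : 0 < (-1/τ).im := by
  rw [neg_div, Complex.neg_im, one_div, Complex.inv_im, neg_div, neg_neg]
  have : τ ≠ 0 := by rintro rfl; simp at hτ
  exact div_pos hτ (Complex.normSq_pos.mpr this)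

lemma tv_eta3_S {τ : ℂ} (hτ : 0 < τ.im) :
    eta3 τ = I / (τ * (-I * τ) ^ (1/2 : ℂ)) * eta3 (-1/τ) := by
  have h0 : τ ≠ 0 := by rintro rfl; simp at hτ
  have hpi : (Real.pi : ℂ) ≠ 0 := by exact_mod_cast Real.pi_ne_zero
  have h1 : (τ/2+1/2)/τ = -((-1/τ)/2 + 1/2) + 1 := by field_simp; ring
  rw [tv_eta3_theta hτ, tv_eta3_theta (tv_im_S hτ), jacobiTheta₂'_functional_equation, h1,
    jacobiTheta₂'_add_left, jacobiTheta₂_add_left, jacobiTheta₂_neg_left, jacobiTheta₂'_neg_left,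
    tv_theta_zero]
  have h2 : e (τ/8+1/4) * cexp (-Real.pi * I * (τ/2+1/2)^2/τ)
      = -I * e ((-1/τ)/8 + 1/4) := by
    have hI : -I = cexp (-(Real.pi/2 * I)) := by rw [Complex.exp_neg, Complex.exp_pi_div_two_mul_I]; simp
    rw [hI]
    simp only [e]
    rw [← Complex.exp_add, ← Complex.exp_add]; congr 1
    field_simp; ring
  have h3 : (-I * τ) ^ (1/2 : ℂ) ≠ 0 := by
    rw [Ne, Complex.cpow_eq_zero_iff]; simp [h0]
  generalize jacobiTheta₂' _ _ = J
  linear_combination (J / ((-I * τ) ^ (1/2 : ℂ) * τ * 2 * Real.pi)) * h2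

lemma tv_eta3_T (τ : ℂ) : eta3 (τ + 1) = e (1/8) * eta3 τ := by
  have : ∀ m : ℤ, tvW (τ+1) m = e (1/8) * tvW τ m := by
    intro m
    simp only [tvW]
    obtain ⟨k, hk⟩ : ∃ k : ℤ, m * (m+1) = 2 * k := (Int.even_mul_succ_self m).two_dvd
    have hk' : (m : ℂ) * (m + 1) = 2 * k := by exact_mod_cast hk
    have : ((m : ℂ) + 1/2)^2 / 2 * (τ+1) + ((m : ℂ) + 1/2) / 2
       = (1/8 + k) + (((m : ℂ) + 1/2)^2 / 2 * τ + ((m : ℂ) + 1/2) / 2) := by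
      linear_combination (1/2) * hk'
    rw [this, tv_e_add, tv_e_add, tv_e_int, mul_one]
  have h1 : I * eta3 (τ+1) = I * (e (1/8) * eta3 τ) := by
    rw [tv_I_eta3, ← mul_assoc, mul_comm I, mul_assoc, tv_I_eta3, ← tsum_mul_left]
    exact tsum_congr fun m => by rw [this]; ring
  exact mul_left_cancel₀ I_ne_zero h1

lemma tv_eta3_ne_of_large {τ : ℂ} (hτ : 3 ≤ 4 * τ.im^2) (hp : 0 < τ.im) : eta3 τ ≠ 0 := by
  intro h0
  have h1 := tv_I_eta3 τ
  rw [h0, mul_zero] at h1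
  have hs := tvW_summable_mul hp
  -- fold
  have h2 := hs.hasSum
  rw [← h1] at h2
  have h3 := h2.nat_add_neg_add_one
  have h4 : HasSum (fun n : ℕ => (2 * (n : ℂ) + 1) * tvW τ n) 0 := by
    refine h3.congr_fun ?_ |> id
    intro n
    have := tvW_neg τ n
    rw [show (-((n : ℤ) + 1)) = -1 - (n : ℤ) by ring, this]
    push_cast; ring
  have h5 := (hasSum_nat_add_iff' 1).mpr h4
  simp at h5
  set r := Real.exp (-2 * Real.pi * τ.im) with hr
  have hr6 : 6 * r < 1 := by
    have hv : (5 : ℝ) ≤ 2 * Real.pi * τ.im := by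
      have : (0.86 : ℝ) ≤ τ.im := by nlinarith
      nlinarith [Real.pi_gt_three]
    have : r ≤ Real.exp (-5) := Real.exp_le_exp.mpr (by linarith)
    have h6 := Real.add_one_lt_exp (show (5:ℝ) ≠ 0 by norm_num)
    rw [Real.exp_neg] at this
    have : r < 6⁻¹ := this.trans_lt (inv_strictAnti₀ (by norm_num) (by linarith))
    linarith
  have hr0 : 0 < r := Real.exp_pos _
  have hb : ∀ n : ℕ, ‖(2 * ((n : ℂ) + 1) + 1) * tvW τ (n + 1)‖ ≤ ‖tvW τ 0‖ * ((3 * r) * (3 * r)^n) := by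
    intro n
    rw [norm_mul, tvW_norm, tvW_norm, ← pow_succ', mul_pow]
    have e1 : ‖(2 * ((n : ℂ) + 1) + 1)‖ = 2 * ((n : ℝ) + 1) + 1 := by
      rw [show (2 * ((n : ℂ) + 1) + 1) = ((2 * ((n : ℝ) + 1) + 1 : ℝ) : ℂ) by push_cast; ring, Complex.norm_real, Real.norm_of_nonneg (by positivity)]
    have e2 : 2 * ((n : ℝ) + 1) + 1 ≤ 3^(n+1) := by
      have := one_add_mul_le_pow (show (-2:ℝ) ≤ 2 by norm_num) (n+1)
      norm_num at this ⊢; linarith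
    rw [e1, hr, ← Real.exp_nat_mul, mul_left_comm, ← Real.exp_add]
    gcongr
    · push_cast
      have : (0:ℝ) ≤ n := n.cast_nonneg
      have h7 : 0 ≤ Real.pi * τ.im := by positivity
      nlinarith [mul_nonneg h7 (mul_nonneg this this), mul_nonneg h7 this]
  have hg : HasSum (fun n : ℕ => ‖tvW τ 0‖ * ((3 * r) * (3 * r)^n)) (‖tvW τ 0‖ * ((3 * r) * (1 - 3 * r)⁻¹)) :=
    ((hasSum_geometric_of_lt_one (by positivity) (by linarith)).mul_left _).mul_left _
  have h8 := tsum_of_norm_bounded hg hb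
  rw [h5.tsum_eq] at h8
  have h9 : 0 < ‖tvW τ 0‖ := by rw [tvW_norm]; positivity
  rw [norm_neg] at h8
  have h10 : (3 * r) * (1 - 3 * r)⁻¹ < 1 := by
    rw [← div_eq_mul_inv, div_lt_one (by linarith)]; linarith
  nlinarith

lemma tv_eta3_ne {τ : ℂ} (hτ : 0 < τ.im) : eta3 τ ≠ 0 := by
  have key : ∀ g : Matrix.SpecialLinearGroup (Fin 2) ℤ, ∀ z : UpperHalfPlane,
      eta3 ((g • z : UpperHalfPlane) : ℂ) = 0 ↔ eta3 (z : ℂ) = 0 := by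
    intro g
    have hg : g ∈ Subgroup.closure {ModularGroup.S, ModularGroup.T} := by
      simp [SpecialLinearGroup.SL2Z_generators]
    induction hg using Subgroup.closure_induction with
    | one => simp
    | mem g hg =>
      intro z
      rcases hg with h1 | h2
      · subst h1
        have := tv_eta3_S z.im_pos
        rw [UpperHalfPlane.modular_S_smul]
        have hz : ((UpperHalfPlane.mk (-(z : ℂ))⁻¹ z.im_inv_neg_coe_pos : UpperHalfPlane) : ℂ) = -1 / (z:ℂ) := by
          show (-(z : ℂ))⁻¹ = _
          rw [inv_neg, neg_div, one_div]
        rw [hz]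
        have h0 : (z : ℂ) ≠ 0 := z.ne_zero
        have h3 : (-I * (z:ℂ)) ^ (1/2 : ℂ) ≠ 0 := by
          rw [Ne, Complex.cpow_eq_zero_iff]; simp [h0]
        constructor
        · intro h; rw [this]; exact mul_eq_zero_of_right _ h
        · intro h
          rw [this] at h
          refine (mul_eq_zero.mp h).resolve_left ?_
          exact div_ne_zero I_ne_zero (mul_ne_zero h0 h3)
      · rw [Set.mem_singleton_iff.mp h2, UpperHalfPlane.modular_T_smul, UpperHalfPlane.coe_vadd]
        rw [show ((1 : ℝ) : ℂ) + (z : ℂ) = z + 1 by push_cast; ring, tv_eta3_T]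
        simp [tv_e_ne]
    | mul g h _ _ ig ih => intro z; rw [mul_smul, ig, ih]
    | inv g _ ig => intro z; rw [← ig (g⁻¹ • z), smul_inv_smul]
  obtain ⟨g, hg⟩ := ModularGroup.exists_smul_mem_fd ⟨τ, hτ⟩
  have h1 := ModularGroup.three_le_four_mul_im_sq_of_mem_fd hg
  have h2 := tv_eta3_ne_of_large (τ := ((g • (⟨τ, hτ⟩ : UpperHalfPlane) : UpperHalfPlane) : ℂ)) h1 (UpperHalfPlane.im_pos _)
  intro h
  exact h2 ((key g ⟨τ, hτ⟩).mpr h)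


noncomputable def tvE2s (τ : ℂ) : ℂ := E2 τ - 3 / (Real.pi * τ.im)

lemma tv_E2_eq (z : UpperHalfPlane) : E2 (z : ℂ) = EisensteinSeries.E2 z := by
  rw [EisensteinSeries.E2_eq_tsum_cexp, E2, tsum_pnat_eq_tsum_succ (f := fun n : ℕ => ((ArithmeticFunction.sigma 1 n : ℕ) : ℂ) * cexp (2 * Real.pi * I * (z : ℂ)) ^ n)]
  congr 2
  refine tsum_congr fun n => ?_
  congr 1
  · simp [sigma1, ArithmeticFunction.sigma_apply]
  · simp only [e]
    rw [← Complex.exp_nat_mul]; congr 1; push_cast; ring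

lemma tvE2s_S {τ : ℂ} (hτ : 0 < τ.im) : tvE2s (-1/τ) = τ^2 * tvE2s τ := by
  have h0 : τ ≠ 0 := by rintro rfl; simp at hτ
  have hpi : (Real.pi : ℂ) ≠ 0 := by exact_mod_cast Real.pi_ne_zero
  have h := congrFun (EisensteinSeries.E2_slash_action ModularGroup.S) ⟨τ, hτ⟩
  rw [SlashInvariantForm.slash_S_apply] at h
  simp only [Pi.sub_apply, Pi.smul_apply, EisensteinSeries.D2_S, ← tv_E2_eq, riemannZeta_two] at h
  simp only [tvE2s]
  have h2 : (-1/τ).im = τ.im / Complex.normSq τ := by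
    rw [neg_div, Complex.neg_im, one_div, Complex.inv_im, neg_div, neg_neg]
  have hc : (Complex.normSq τ : ℂ) = τ * (τ - 2 * I * τ.im) := by
    rw [← Complex.mul_conj]; congr 1
    apply Complex.ext <;> simp <;> ring
  have hz : (-τ)⁻¹ = -1 / τ := by rw [inv_neg, neg_div, one_div]
  rw [hz] at h
  have hv : (τ.im : ℂ) ≠ 0 := by exact_mod_cast hτ.ne'
  rw [h2]; push_cast; rw [hc]
  have h' : E2 (-1/τ) = τ^2 * (E2 τ - (1 / (2 * ((Real.pi : ℂ)^2/6))) * (2 * Real.pi * I / τ)) := by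
    have h3 : τ ^ (-2 : ℤ) = (τ^2)⁻¹ := by rw [zpow_neg]; norm_cast
    rw [h3] at h
    rw [smul_eq_mul] at h
    rw [← h]; field_simp
  rw [h']
  field_simp
  ring


lemma tv_gauss_int : Integrable (fun t : ℝ => Real.exp (-t^2)) := by
  simpa using integrable_exp_neg_mul_sq (show (0:ℝ) < 1 by norm_num)

lemma tv_gauss_val : ∫ t : ℝ, Real.exp (-t^2) = Real.sqrt Real.pi := by
  simpa using integral_gaussian 1

lemma tv_erfc_neg (x : ℝ) : erfc (-x) = 2 - erfc x := by
  have h1 : ∫ t in Set.Ioi (-x), Real.exp (-t^2) = ∫ t in Set.Iic x, Real.exp (-t^2) := by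
    rw [← integral_comp_neg_Iic]; simp
  have h2 := intervalIntegral.integral_Iic_add_Ioi (b := x) tv_gauss_int.integrableOn tv_gauss_int.integrableOn
  rw [tv_gauss_val] at h2
  simp only [erfc]
  rw [h1]
  have : Real.sqrt Real.pi ≠ 0 := by positivity
  field_simp
  linarith

lemma tv_erfc_nonneg (x : ℝ) : 0 ≤ erfc x := by
  rw [erfc]
  exact mul_nonneg (by positivity) (integral_nonneg fun _ => (Real.exp_pos _).le)

lemma tv_erfc_le_two (x : ℝ) : erfc x ≤ 2 := by
  have := tv_erfc_nonneg (-x); rw [tv_erfc_neg] at this; linarith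

lemma tv_erfc_zero : erfc 0 = 1 := by
  have := tv_erfc_neg 0; simp at this; linarith

lemma tv_erfc_le {x : ℝ} (hx : 0 ≤ x) : erfc x ≤ Real.exp (-x^2) := by
  have h1 : ∫ t in Set.Ioi x, Real.exp (-t^2) = ∫ t in Set.Ioi (0:ℝ), Real.exp (-(t+x)^2) := by
    rw [← integral_indicator measurableSet_Ioi, ← integral_indicator measurableSet_Ioi,
      ← integral_add_right_eq_self _ x]
    congr 1; funext t
    simp only [Set.indicator_apply, Set.mem_Ioi, lt_add_iff_pos_left]
  have h2 : ∫ t in Set.Ioi (0:ℝ), Real.exp (-(t+x)^2) ≤ ∫ t in Set.Ioi (0:ℝ), Real.exp (-x^2) * Real.exp (-t^2) := by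
    apply setIntegral_mono_on
    · exact (tv_gauss_int.comp_add_right x).integrableOn
    · exact (tv_gauss_int.const_mul _).integrableOn
    · exact measurableSet_Ioi
    · intro t ht
      rw [← Real.exp_add]
      apply Real.exp_le_exp.mpr
      have : 0 ≤ t * x := mul_nonneg (le_of_lt ht) hx
      nlinarith
  have h0 := tv_erfc_zero
  rw [integral_const_mul] at h2
  simp only [erfc] at h0 ⊢
  rw [h1]
  calc _ ≤ (2 / Real.sqrt Real.pi) * (Real.exp (-x^2) * ∫ t in Set.Ioi (0:ℝ), Real.exp (-t^2)) := by gcongr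
    _ = Real.exp (-x^2) * ((2 / Real.sqrt Real.pi) * ∫ t in Set.Ioi (0:ℝ), Real.exp (-t^2)) := by ring
    _ = _ := by rw [h0, mul_one]

lemma tv_erfc_deriv (x : ℝ) : HasDerivAt erfc (-(2 / Real.sqrt Real.pi) * Real.exp (-x^2)) x := by
  have hc : Continuous (fun t : ℝ => Real.exp (-t^2)) := by fun_prop
  have h1 : erfc = fun y => (2 / Real.sqrt Real.pi) * ((∫ t in Set.Ioi (0:ℝ), Real.exp (-t^2)) - ∫ t in (0:ℝ)..y, Real.exp (-t^2)) := by
    funext y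
    rw [erfc]; congr 1
    rw [← intervalIntegral.integral_Ioi_sub_Ioi' tv_gauss_int.integrableOn tv_gauss_int.integrableOn]
    ring
  rw [h1]
  have h2 := intervalIntegral.integral_hasDerivAt_right (hc.intervalIntegrable 0 x) hc.stronglyMeasurable.stronglyMeasurableAtFilter hc.continuousAt
  exact ((h2.const_sub (∫ t in Set.Ioi (0:ℝ), Real.exp (-t^2))).const_mul (2 / Real.sqrt Real.pi)).congr_deriv (by ring)

noncomputable def tvp (v c a b : ℝ) : ℝ :=
  a * (1 - erfc (Real.sqrt (2 * Real.pi * v) * ((c * a - b / c) / 2))) +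
    (1 / c) * (Real.exp (-2 * Real.pi * v * ((c * a - b / c) / 2)^2) / (Real.pi * Real.sqrt (2 * v)))

lemma tv_pointwise (M X : ℝ) :
    Real.sign X * (M - max (M - |X|) 0 + max (-M - |X|) 0) = (|M + X| - |M - X|) / 2 := by
  rcases lt_trichotomy X 0 with h | h | h
  · rw [Real.sign_of_neg h, abs_of_neg h]
    rcases max_cases (M - -X) 0 with ⟨h1, h2⟩ | ⟨h1, h2⟩ <;>
    rcases max_cases (-M - -X) 0 with ⟨h3, h4⟩ | ⟨h3, h4⟩ <;>
    rcases abs_cases (M + X) with ⟨h5, h6⟩ | ⟨h5, h6⟩ <;>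
    rcases abs_cases (M - X) with ⟨h7, h8⟩ | ⟨h7, h8⟩ <;>
    rw [h1, h3, h5, h7] <;> linarith
  · subst h; simp
  · rw [Real.sign_of_pos h, abs_of_pos h]
    rcases max_cases (M - X) 0 with ⟨h1, h2⟩ | ⟨h1, h2⟩ <;>
    rcases max_cases (-M - X) 0 with ⟨h3, h4⟩ | ⟨h3, h4⟩ <;>
    rcases abs_cases (M + X) with ⟨h5, h6⟩ | ⟨h5, h6⟩ <;>
    rcases abs_cases (M - X) with ⟨h7, h8⟩ | ⟨h7, h8⟩ <;>
    rw [h1, h3, h5, h7] <;> linarith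

lemma tv_summable_lin {τ : ℂ} (hτ : 0 < τ.im) (f : ℝ → ℝ) (K : ℝ) (hf : ∀ M, |f M| ≤ |M| + K) :
    Summable (fun m : ℤ => tvW τ m * (f ((m : ℝ) + 1/2) : ℂ)) := by
  have h1 := (tvW_summable_mul hτ).norm.add ((tvW_summable hτ).norm.mul_left K)
  refine Summable.of_norm_bounded h1 fun m => ?_
  rw [norm_mul, norm_mul, Complex.norm_real, Real.norm_eq_abs]
  have : ‖(m : ℂ) + 1/2‖ = |(m : ℝ) + 1/2| := by
    rw [← Real.norm_eq_abs, ← Complex.norm_real]; push_cast; rfl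
  rw [this]
  nlinarith [hf ((m : ℝ) + 1/2), norm_nonneg (tvW τ m)]

lemma tv_reflect_fun (τ : ℂ) (f : ℝ → ℝ) :
    ∑' m : ℤ, tvW τ m * (f ((m : ℝ) + 1/2) : ℂ) = - ∑' m : ℤ, tvW τ m * (f (-((m : ℝ) + 1/2)) : ℂ) := by
  rw [← tv_tsum_reflect, ← tsum_neg]
  refine tsum_congr fun m => ?_
  rw [tvW_neg, show (((-1 - m : ℤ) : ℝ) + 1/2) = -((m : ℝ) + 1/2) by push_cast; ring]
  ring

lemma tv_g_identity {τ : ℂ} (hτ : 0 < τ.im) (X : ℝ) :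
    ∑' m : ℤ, e (-(X : ℂ)^2 * τ / 2) * tvW τ m *
      ((tvp τ.im 1 ((m : ℝ) + 1/2 + X) ((m : ℝ) + 1/2 - X) - |(m : ℝ) + 1/2 + X| : ℝ) : ℂ)
    = 2 * (I * eta3 τ) * gfun τ X := by
  have hS0 : I * eta3 τ ≠ 0 := mul_ne_zero I_ne_zero (tv_eta3_ne hτ)
  set S := I * eta3 τ with hS
  set er : ℝ := 1 - erfc (Real.sqrt (2 * Real.pi * τ.im) * X) with her
  set G : ℝ := Real.exp (-2 * Real.pi * τ.im * X^2) / (Real.pi * Real.sqrt (2 * τ.im)) with hG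
  have hSM : HasSum (fun m : ℤ => tvW τ m * (((m : ℝ) + 1/2 : ℝ) : ℂ)) S := by
    rw [hS, tv_I_eta3]
    convert (tvW_summable_mul hτ).hasSum using 2 with m
    push_cast; ring
  have hW : HasSum (tvW τ) 0 := by rw [← tvW_tsum τ]; exact (tvW_summable hτ).hasSum
  have hab : ∀ f : ℝ → ℝ, (∀ M, |f M| ≤ |M| + |X|) → Summable (fun m : ℤ => tvW τ m * (f ((m : ℝ) + 1/2) : ℂ)) :=
    fun f hf => tv_summable_lin hτ f |X| hf
  have b1 : ∀ M, |(fun M : ℝ => |M + X|) M| ≤ |M| + |X| := fun M => by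
    rw [abs_abs]; exact abs_add_le M X
  have b2 : ∀ M, |(fun M : ℝ => |M - X|) M| ≤ |M| + |X| := fun M => by
    rw [abs_abs]; exact abs_sub M X
  have b3 : ∀ M, |(fun M : ℝ => max (M - |X|) 0) M| ≤ |M| + |X| := fun M => by
    have := le_abs_self M; have := abs_nonneg M; have := abs_nonneg X
    rw [abs_of_nonneg (le_max_right _ _)]; apply max_le <;> linarith
  have b4 : ∀ M, |(fun M : ℝ => max (-M - |X|) 0) M| ≤ |M| + |X| := fun M => by
    have := neg_le_abs M; have := abs_nonneg M; have := abs_nonneg X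
    rw [abs_of_nonneg (le_max_right _ _)]; apply max_le <;> linarith
  have s1 := (hab _ b1).hasSum
  have s2 := (hab _ b2).hasSum
  have s3 := (hab _ b3).hasSum
  have s4 := (hab _ b4).hasSum
  have r1 : ∑' m : ℤ, tvW τ m * ((|(m : ℝ) + 1/2 + X| : ℝ) : ℂ) = - ∑' m : ℤ, tvW τ m * ((|(m : ℝ) + 1/2 - X| : ℝ) : ℂ) := by
    rw [tv_reflect_fun τ (fun M => |M + X|)]
    congr 1
    refine tsum_congr fun m => ?_
    rw [show (-((m : ℝ) + 1/2) + X) = -((m : ℝ) + 1/2 - X) by ring, abs_neg]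
  have r2 := tv_reflect_fun τ (fun M => max (M - |X|) 0)
  simp only at s1 s2 s3 s4 r2
  set Q := ∑' m : ℤ, tvW τ m * ((|(m : ℝ) + 1/2 + X| : ℝ) : ℂ) with hQ
  set R := ∑' m : ℤ, tvW τ m * ((max ((m : ℝ) + 1/2 - |X|) 0 : ℝ) : ℂ) with hR
  have hQR : (Real.sign X : ℂ) * (S - 2 * R) = Q := by
    have t1 := ((hSM.sub s3).add s4).mul_left (Real.sign X : ℂ)
    have t2 := (s1.sub s2).mul_left (1/2 : ℂ)
    have := t1.unique (t2.congr_fun (fun m => by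
      have := tv_pointwise ((m : ℝ) + 1/2) X
      have h' : (Real.sign X : ℂ) * (((m : ℝ) + 1/2 : ℝ) - ((max ((m : ℝ) + 1/2 - |X|) 0 : ℝ) : ℂ) + ((max (-((m : ℝ) + 1/2) - |X|) 0 : ℝ) : ℂ)) = (((|(m : ℝ) + 1/2 + X| : ℝ) : ℂ) - ((|(m : ℝ) + 1/2 - X| : ℝ) : ℂ)) / 2 := by exact_mod_cast this
      linear_combination (tvW τ m) * h'))
    linear_combination this - Real.sign X * r2 - 1/2 * r1
  have hRg : (∑' m : ℤ, if |X| < (m : ℝ) + 1/2 then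
      (((m : ℝ) + 1/2 - |X| : ℝ) : ℂ) * e (((m : ℂ) + 1/2)^2 / 2 * τ + ((m : ℂ) + 1/2) / 2)
    else 0) = R := by
    refine tsum_congr fun m => ?_
    split_ifs with h
    · rw [max_eq_left (by linarith), tvW]; ring
    · rw [max_eq_right (by linarith)]; simp
  have hsg : (Real.sign X) * erfc (Real.sqrt (2 * Real.pi * τ.im) * |X|) = Real.sign X - er := by
    rcases lt_trichotomy X 0 with h | h | h
    · rw [Real.sign_of_neg h, abs_of_neg h, mul_neg, tv_erfc_neg, her]; ring
    · subst h; simp [her, tv_erfc_zero]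
    · rw [Real.sign_of_pos h, abs_of_pos h, her]; ring
  have hsg' : (Real.sign X : ℂ) * (erfc (Real.sqrt (2 * Real.pi * τ.im) * |X|) : ℂ) = Real.sign X - er := by
    exact_mod_cast hsg
  have hL : HasSum (fun m : ℤ => e (-(X : ℂ)^2 * τ / 2) * tvW τ m *
      ((tvp τ.im 1 ((m : ℝ) + 1/2 + X) ((m : ℝ) + 1/2 - X) - |(m : ℝ) + 1/2 + X| : ℝ) : ℂ))
      (e (-(X : ℂ)^2 * τ / 2) * (er * S + (er * X + G) * 0 - Q)) := by
    refine ((((hSM.mul_left (er : ℂ)).add (hW.mul_left ((er : ℂ) * X + G))).sub s1).mul_left (e (-(X : ℂ)^2 * τ / 2))).congr_fun fun m => ?_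
    have : tvp τ.im 1 ((m : ℝ) + 1/2 + X) ((m : ℝ) + 1/2 - X) = ((m : ℝ) + 1/2 + X) * er + G := by
      rw [tvp, her, hG, show (1 * ((m : ℝ) + 1/2 + X) - ((m : ℝ) + 1/2 - X)/1)/2 = X by ring]; ring
    rw [this]; push_cast; ring
  rw [hL.tsum_eq, gfun, gplus, gstar, hRg, ← hS]
  have : (2 * S) * (e (-(X : ℂ)^2 * τ / 2) * ((Real.sign X : ℂ) / S) * R - e (-(X : ℂ)^2 * τ / 2) * ((Real.sign X : ℂ) / 2) * (erfc (Real.sqrt (2 * Real.pi * τ.im) * |X|) : ℂ)) = e (-(X : ℂ)^2 * τ / 2) * (2 * Real.sign X * R - S * (Real.sign X * (erfc (Real.sqrt (2 * Real.pi * τ.im) * |X|) : ℂ))) := by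
    field_simp
  rw [this, hsg', ← hQR]; ring


lemma tv_sqrt_sq {v : ℝ} (hv : 0 < v) (x : ℝ) :
    (Real.sqrt (2 * Real.pi * v) * x)^2 = 2 * Real.pi * v * x^2 := by
  rw [mul_pow, Real.sq_sqrt (by positivity)]

lemma tvp_bound_pos {v c a b : ℝ} (hv : 0 < v) (hc : 1 ≤ c) (h : 0 ≤ a * ((c * a - b / c) / 2)) :
    |(|a| - tvp v c a b)| ≤ (|a| + (1 / (Real.pi * Real.sqrt (2 * v))) * (1 / c)) *
      Real.exp (-2 * Real.pi * v * ((c * a - b / c) / 2)^2) := by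
  rw [tvp]
  set X := (c * a - b / c) / 2 with hX
  set y := Real.sqrt (2 * Real.pi * v) * X with hy
  have hs : 0 < Real.sqrt (2 * Real.pi * v) := by positivity
  have hexp : Real.exp (-y^2) = Real.exp (-2 * Real.pi * v * X^2) := by
    rw [hy, tv_sqrt_sq hv]; congr 1; ring
  have key : |(|a| - a * (1 - erfc y))| ≤ |a| * Real.exp (-2 * Real.pi * v * X^2) := by
    rcases lt_trichotomy a 0 with ha | ha | ha
    · have hX0 : X ≤ 0 := by nlinarith
      have hy0 : 0 ≤ -y := by rw [hy]; nlinarith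
      have e1 := tv_erfc_le hy0
      have e2 := tv_erfc_neg y
      have e3 := tv_erfc_nonneg (-y)
      rw [neg_sq, hexp] at e1
      rw [abs_of_neg ha, show -a - a * (1 - erfc y) = -a * erfc (-y) by rw [e2]; ring,
        abs_of_nonneg (by nlinarith)]
      exact mul_le_mul_of_nonneg_left e1 (by linarith)
    · subst ha; simp
    · have hX0 : 0 ≤ X := by nlinarith
      have hy0 : 0 ≤ y := by rw [hy]; positivity
      have e1 := tv_erfc_le hy0
      have e3 := tv_erfc_nonneg y
      rw [hexp] at e1
      rw [abs_of_pos ha, show a - a * (1 - erfc y) = a * erfc y by ring,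
        abs_of_nonneg (by nlinarith)]
      exact mul_le_mul_of_nonneg_left e1 (by linarith)
  calc _ = |(|a| - a * (1 - erfc y)) - (1 / (Real.pi * Real.sqrt (2 * v))) * (1 / c) * Real.exp (-2 * Real.pi * v * X^2)| := by
        congr 1; ring
    _ ≤ _ + |(1 / (Real.pi * Real.sqrt (2 * v))) * (1 / c) * Real.exp (-2 * Real.pi * v * X^2)| := abs_sub _ _
    _ ≤ _ := by
      rw [abs_of_nonneg (a := (1 / (Real.pi * Real.sqrt (2 * v))) * (1 / c) * _) (by positivity)]
      linarith

lemma tvp_bound {v c a b D : ℝ} (hv : 0 < v) (hc : 1 ≤ c) (hD1 : 0 < a * b → D ≤ a * b)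
    (hD2 : D ≤ (c^2 * a^2 + b^2 / c^2) / 2) :
    Real.exp (-Real.pi * v * (a * b)) * |(|a| - tvp v c a b)| ≤
      (2 * |a| + 1 / (Real.pi * Real.sqrt (2 * v))) * Real.exp (-Real.pi * v * D) := by
  have hc0 : 0 < c := by linarith
  set K := 1 / (Real.pi * Real.sqrt (2 * v)) with hK
  have hK0 : 0 < K := by positivity
  have hc1 : 1 / c ≤ 1 := by rw [div_le_one hc0]; exact hc
  have hid : a * b + 2 * ((c * a - b / c) / 2)^2 = (c^2 * a^2 + b^2 / c^2) / 2 := by field_simp; ring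
  have hpv : 0 < Real.pi * v := by positivity
  have hg : Real.exp (-Real.pi * v * (a * b)) * Real.exp (-2 * Real.pi * v * ((c * a - b / c) / 2)^2) ≤ Real.exp (-Real.pi * v * D) := by
    rw [← Real.exp_add]
    apply Real.exp_le_exp.mpr
    rw [← hid] at hD2
    nlinarith [mul_le_mul_of_nonneg_left hD2 hpv.le]
  by_cases h : 0 ≤ a * ((c * a - b / c) / 2)
  · calc _ ≤ Real.exp (-Real.pi * v * (a * b)) * ((|a| + K * (1 / c)) * Real.exp (-2 * Real.pi * v * ((c * a - b / c) / 2)^2)) := by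
          gcongr; exact tvp_bound_pos hv hc h
      _ = (|a| + K * (1/c)) * (Real.exp (-Real.pi * v * (a * b)) * Real.exp (-2 * Real.pi * v * ((c * a - b / c) / 2)^2)) := by ring
      _ ≤ (2 * |a| + K) * Real.exp (-Real.pi * v * D) := by
          have := abs_nonneg a
          gcongr
          · linarith
          · nlinarith
  · push Not at h
    have hab : 0 < a * b := by
      have h1 : a * ((c * a - b / c) / 2) * (2 * c) = c^2 * a^2 - a * b := by field_simp
      have : c^2 * a^2 - a * b < 0 := by rw [← h1]; exact mul_neg_of_neg_of_pos h (by positivity)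
      nlinarith [mul_nonneg (sq_nonneg c) (sq_nonneg a)]
    have hE : Real.exp (-Real.pi * v * (a * b)) ≤ Real.exp (-Real.pi * v * D) := by
      apply Real.exp_le_exp.mpr
      nlinarith [mul_le_mul_of_nonneg_left (hD1 hab) hpv.le]
    have hp : |(|a| - tvp v c a b)| ≤ 2 * |a| + K * Real.exp (-2 * Real.pi * v * ((c * a - b / c) / 2)^2) := by
      rw [tvp]
      set X := (c * a - b / c) / 2
      set y := Real.sqrt (2 * Real.pi * v) * X
      have e1 := tv_erfc_nonneg y
      have e2 := tv_erfc_le_two y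
      have e4 : 0 ≤ (1 / c) * (Real.exp (-2 * Real.pi * v * X^2) / (Real.pi * Real.sqrt (2 * v))) := by positivity
      have e5 : (1 / c) * (Real.exp (-2 * Real.pi * v * X^2) / (Real.pi * Real.sqrt (2 * v))) ≤ K * Real.exp (-2 * Real.pi * v * X^2) := by
        calc _ = (1/c) * (K * Real.exp (-2 * Real.pi * v * X^2)) := by rw [hK]; ring
          _ ≤ 1 * (K * Real.exp (-2 * Real.pi * v * X^2)) := by gcongr
          _ = _ := one_mul _
      rcases abs_cases a with ⟨h1, h2⟩ | ⟨h1, h2⟩ <;> rw [h1] <;> rw [abs_le] <;> constructor <;> nlinarith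
    calc _ ≤ Real.exp (-Real.pi * v * (a * b)) * (2 * |a| + K * Real.exp (-2 * Real.pi * v * ((c * a - b / c) / 2)^2)) := by gcongr
      _ = 2 * |a| * Real.exp (-Real.pi * v * (a * b)) + K * (Real.exp (-Real.pi * v * (a * b)) * Real.exp (-2 * Real.pi * v * ((c * a - b / c) / 2)^2)) := by ring
      _ ≤ 2 * |a| * Real.exp (-Real.pi * v * D) + K * Real.exp (-Real.pi * v * D) := by gcongr
      _ = _ := by ring

lemma tvp_tendsto {v a b : ℝ} (hv : 0 < v) (ha : a ≠ 0) :
    Filter.Tendsto (fun c => tvp v c a b) Filter.atTop (nhds |a|) := by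
  rw [tendsto_iff_norm_sub_tendsto_zero]
  have hX : Filter.Tendsto (fun c : ℝ => a * ((c * a - b / c) / 2)) Filter.atTop Filter.atTop := by
    have h1 : Filter.Tendsto (fun c : ℝ => (a^2/2) * c) Filter.atTop Filter.atTop :=
      Filter.Tendsto.const_mul_atTop (by positivity) Filter.tendsto_id
    have h2 : Filter.Tendsto (fun c : ℝ => -(a * b / 2) / c) Filter.atTop (nhds 0) := Filter.Tendsto.div_atTop tendsto_const_nhds Filter.tendsto_id
    refine (h1.atTop_add h2).congr fun c => ?_
    ring
  have hE : Filter.Tendsto (fun c : ℝ => Real.exp (-2 * Real.pi * v * ((c * a - b / c) / 2)^2)) Filter.atTop (nhds 0) := by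
    apply Real.tendsto_exp_atBot.comp
    have h3 : Filter.Tendsto (fun c : ℝ => (a * ((c * a - b / c) / 2))^2) Filter.atTop Filter.atTop :=
      (Filter.tendsto_pow_atTop two_ne_zero).comp hX
    have h4 := Filter.Tendsto.const_mul_atTop_of_neg (show (-2 * Real.pi * v / a^2) < 0 by
      have : 0 < Real.pi * v / a^2 := by positivity
      have h : -2 * Real.pi * v / a^2 = -2 * (Real.pi * v / a^2) := by ring
      rw [h]; linarith) h3
    refine h4.congr fun c => ?_
    field_simp
  have hB : Filter.Tendsto (fun c : ℝ => (|a| + (1 / (Real.pi * Real.sqrt (2 * v))) * 1) *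
      Real.exp (-2 * Real.pi * v * ((c * a - b / c) / 2)^2)) Filter.atTop (nhds 0) := by
    simpa using hE.const_mul (|a| + (1 / (Real.pi * Real.sqrt (2 * v))) * 1)
  refine squeeze_zero' (Filter.Eventually.of_forall fun _ => norm_nonneg _) ?_ hB
  filter_upwards [hX.eventually_ge_atTop 0, Filter.eventually_ge_atTop 1] with c h1 h2
  rw [Real.norm_eq_abs, abs_sub_comm]
  refine (tvp_bound_pos hv h2 h1).trans ?_
  have hc1 : 1 / c ≤ 1 := by rw [div_le_one (by linarith)]; exact h2
  gcongr


noncomputable def tva (N : ℕ) (h : ℝ) (q : ℤ × ℤ) : ℝ := (q.2 : ℝ) + 1/2 + ((N : ℝ) * q.1 + h)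
noncomputable def tvb (N : ℕ) (h : ℝ) (q : ℤ × ℤ) : ℝ := (q.2 : ℝ) + 1/2 - ((N : ℝ) * q.1 + h)
noncomputable def tvEE (N : ℕ) (h : ℝ) (τ : ℂ) (q : ℤ × ℤ) : ℂ :=
  e (-(((N : ℝ) * q.1 + h : ℝ) : ℂ)^2 * τ / 2) * tvW τ q.2
/-- summand `E (p_c - |a|)` -/
noncomputable def tvf (N : ℕ) (h : ℝ) (τ : ℂ) (c : ℝ) (q : ℤ × ℤ) : ℂ :=
  tvEE N h τ q * ((tvp τ.im c (tva N h q) (tvb N h q) - |tva N h q| : ℝ) : ℂ)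

lemma tvEE_norm (N : ℕ) (h : ℝ) (τ : ℂ) (q : ℤ × ℤ) :
    ‖tvEE N h τ q‖ = Real.exp (-Real.pi * τ.im * (tva N h q * tvb N h q)) := by
  rw [tvEE, norm_mul, tv_e_norm, tvW_norm, ← Real.exp_add]
  congr 1
  have : (-(((N : ℝ) * q.1 + h : ℝ) : ℂ)^2 * τ / 2).im = -((N : ℝ) * q.1 + h)^2 * τ.im / 2 := by
    rw [show (-(((N : ℝ) * q.1 + h : ℝ) : ℂ)^2 * τ / 2) = ((-((N : ℝ) * q.1 + h)^2 / 2 : ℝ) : ℂ) * τ by push_cast; ring, Complex.im_ofReal_mul]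
    ring
  rw [this, tva, tvb]; ring

lemma tv_summable_exp_abs {ε α β : ℝ} (hε : 0 < ε) (hα : 1 ≤ α) :
    Summable (fun n : ℤ => Real.exp (-ε * |α * n + β|)) := by
  have h1 : Summable (fun n : ℤ => Real.exp (-ε * |(n : ℝ)|)) := by
    apply Summable.of_nat_of_neg <;>
    · have := Real.summable_exp_nat_mul_iff.mpr (show -ε < 0 by linarith)
      refine this.congr fun n => ?_
      simp [mul_comm]
  refine Summable.of_nonneg_of_le (fun _ => (Real.exp_pos _).le) (fun n => ?_) (h1.mul_left (Real.exp (ε * |β|)))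
  rw [← Real.exp_add]
  apply Real.exp_le_exp.mpr
  have h2 : |(n : ℝ)| ≤ |α * n + β| + |β| := by
    calc |(n : ℝ)| ≤ α * |(n : ℝ)| := by nlinarith [abs_nonneg (n : ℝ)]
      _ = |(α * n + β) - β| := by rw [add_sub_cancel_right, abs_mul, abs_of_nonneg (by linarith : (0:ℝ) ≤ α)]
      _ ≤ _ := abs_sub _ _
  nlinarith

noncomputable def tvMaj (N : ℕ) (h v : ℝ) (q : ℤ × ℤ) : ℝ :=
  (2 * |tva N h q| + 1 / (Real.pi * Real.sqrt (2 * v))) *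
    Real.exp (-Real.pi * v * ((|tva N h q| + |tvb N h q|) / (4 * N)))

lemma tv_summable_MX (N : ℕ) (hN : 0 < N) (h : ℝ) {ε : ℝ} (hε : 0 < ε) :
    Summable (fun q : ℤ × ℤ => Real.exp (-ε * (|tva N h q| + |tvb N h q|))) := by
  have s1 := tv_summable_exp_abs (β := h) hε (show (1:ℝ) ≤ N by exact_mod_cast hN)
  have s2 := tv_summable_exp_abs (α := 1) (β := 1/2) hε le_rfl
  have s3 := s1.mul_of_nonneg s2 (fun _ => (Real.exp_pos _).le) (fun _ => (Real.exp_pos _).le)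
  refine Summable.of_nonneg_of_le (fun _ => (Real.exp_pos _).le) (fun q => ?_) s3
  rw [← Real.exp_add]
  apply Real.exp_le_exp.mpr
  have h1 : |(N : ℝ) * q.1 + h| + |1 * (q.2 : ℝ) + 1/2| ≤ |tva N h q| + |tvb N h q| := by
    rw [tva, tvb, one_mul]
    rcases abs_cases ((N : ℝ) * q.1 + h) with ⟨h1, _⟩ | ⟨h1, _⟩ <;>
    rcases abs_cases ((q.2 : ℝ) + 1/2) with ⟨h2, _⟩ | ⟨h2, _⟩ <;>
    rw [h1, h2] <;>
    linarith [le_abs_self ((q.2 : ℝ) + 1/2 + ((N : ℝ) * q.1 + h)), neg_le_abs ((q.2 : ℝ) + 1/2 + ((N : ℝ) * q.1 + h)),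
      le_abs_self ((q.2 : ℝ) + 1/2 - ((N : ℝ) * q.1 + h)), neg_le_abs ((q.2 : ℝ) + 1/2 - ((N : ℝ) * q.1 + h)),
      abs_nonneg ((q.2 : ℝ) + 1/2 + ((N : ℝ) * q.1 + h)), abs_nonneg ((q.2 : ℝ) + 1/2 - ((N : ℝ) * q.1 + h))]
  nlinarith

lemma tvMaj_summable (N : ℕ) (hN : 0 < N) (h : ℝ) {v : ℝ} (hv : 0 < v) : Summable (tvMaj N h v) := by
  have hN' : (0:ℝ) < N := by exact_mod_cast hN
  set ε := Real.pi * v / (8 * N) with hε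
  have hε0 : 0 < ε := by positivity
  have s := (tv_summable_MX N hN h hε0).mul_left (2 / ε + 1 / (Real.pi * Real.sqrt (2 * v)))
  refine Summable.of_nonneg_of_le (fun q => by rw [tvMaj]; positivity) (fun q => ?_) s
  rw [tvMaj]
  set t := |tva N h q| + |tvb N h q| with ht
  have ht0 : 0 ≤ t := by positivity
  have hta : |tva N h q| ≤ t := by rw [ht]; linarith [abs_nonneg (tvb N h q)]
  have h1 : Real.exp (-Real.pi * v * (t / (4 * N))) = Real.exp (-ε * t) * Real.exp (-ε * t) := by
    rw [← Real.exp_add]; congr 1; rw [hε]; field_simp; ring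
  have h2 : ε * t ≤ Real.exp (ε * t) := by linarith [Real.add_one_le_exp (ε * t)]
  have h3 : 1 ≤ Real.exp (ε * t) := Real.one_le_exp (by positivity)
  have h4 : Real.exp (ε * t) * Real.exp (-ε * t) = 1 := by rw [← Real.exp_add]; simp
  have h5 : t * Real.exp (-ε * t) ≤ 1 / ε := by
    rw [le_div_iff₀ hε0, ← h4]; nlinarith [Real.exp_pos (-ε * t)]
  have h6 : Real.exp (-ε * t) ≤ 1 := by nlinarith [Real.exp_pos (-ε * t)]
  rw [h1, ← mul_assoc]
  refine mul_le_mul_of_nonneg_right ?_ (Real.exp_pos _).le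
  set K := 1 / (Real.pi * Real.sqrt (2 * v))
  have hK : 0 < K := by positivity
  have h7 : |tva N h q| * Real.exp (-ε * t) ≤ 1 / ε := le_trans (by gcongr) h5
  have h8 : K * Real.exp (-ε * t) ≤ K := by nlinarith
  have : 2 / ε = 2 * (1 / ε) := by ring
  rw [this, add_mul]; linarith

lemma tv_int_ab {N : ℕ} (hN : 0 < N) {h : ℝ} (hh : ∃ k : ℤ, h = (k : ℝ) / N) (q : ℤ × ℤ) :
    (∃ A : ℤ, 2 * N * tva N h q = A) ∧ (∃ B : ℤ, 2 * N * tvb N h q = B) := by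
  have hN' : (N : ℝ) ≠ 0 := by positivity
  obtain ⟨k, rfl⟩ := hh
  refine ⟨⟨2 * N * q.2 + N + 2 * N * N * q.1 + 2 * k, ?_⟩, ⟨2 * N * q.2 + N - 2 * N * N * q.1 - 2 * k, ?_⟩⟩
  · rw [tva]; push_cast; field_simp; ring
  · rw [tvb]; push_cast; field_simp; ring

lemma tv_absint {A : ℤ} (hA : (A : ℝ) ≠ 0) : (1:ℝ) ≤ |(A : ℝ)| := by
  have : A ≠ 0 := by exact_mod_cast hA
  exact_mod_cast Int.one_le_abs this

lemma tv_D_ab {N : ℕ} (hN : 0 < N) {a b : ℝ} (hA : ∃ A : ℤ, 2 * N * a = A) (hB : ∃ B : ℤ, 2 * N * b = B)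
    (ha : a ≠ 0) (hb : b ≠ 0) : (|a| + |b|) / (4 * N) ≤ |a| * |b| := by
  have hN' : (0:ℝ) < N := by exact_mod_cast hN
  obtain ⟨A, hA⟩ := hA
  obtain ⟨B, hB⟩ := hB
  have h1 := tv_absint (A := A) (by rw [← hA]; positivity)
  have h2 := tv_absint (A := B) (by rw [← hB]; positivity)
  rw [← hA, abs_mul, abs_of_pos (by positivity : (0:ℝ) < 2 * N)] at h1
  rw [← hB, abs_mul, abs_of_pos (by positivity : (0:ℝ) < 2 * N)] at h2
  rw [div_le_iff₀ (by positivity)]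
  nlinarith [abs_nonneg a, abs_nonneg b, mul_le_mul_of_nonneg_right h1 (abs_nonneg b), mul_le_mul_of_nonneg_right h2 (abs_nonneg a)]

lemma tv_D_a {N : ℕ} (hN : 0 < N) {a : ℝ} (hA : ∃ A : ℤ, 2 * N * a = A) :
    |a| / (4 * N) ≤ a^2 / 2 := by
  have hN' : (0:ℝ) < N := by exact_mod_cast hN
  by_cases ha : a = 0
  · subst ha; simp
  obtain ⟨A, hA⟩ := hA
  have h1 := tv_absint (A := A) (by rw [← hA]; positivity)
  rw [← hA, abs_mul, abs_of_pos (by positivity : (0:ℝ) < 2 * N)] at h1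
  rw [div_le_iff₀ (by positivity), ← sq_abs]
  nlinarith [abs_nonneg a, mul_le_mul_of_nonneg_right h1 (abs_nonneg a)]

lemma tvf_bound {N : ℕ} (hN : 0 < N) {h : ℝ} (hh : ∃ k : ℤ, h = (k : ℝ) / N) {τ : ℂ} (hτ : 0 < τ.im)
    {c : ℝ} (hc : 1 ≤ c) (q : ℤ × ℤ) (hq : tva N h q ≠ 0 ∨ c = 1) :
    ‖tvf N h τ c q‖ ≤ tvMaj N h τ.im q := by
  have hN' : (0:ℝ) < N := by exact_mod_cast hN
  obtain ⟨hA, hB⟩ := tv_int_ab hN hh q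
  rw [tvf, norm_mul, tvEE_norm, Complex.norm_real, Real.norm_eq_abs, abs_sub_comm, tvMaj]
  generalize tva N h q = a at *
  generalize tvb N h q = b at *
  apply tvp_bound hτ hc
  · intro hab
    have ha : a ≠ 0 := fun h => by simp [h] at hab
    have hb : b ≠ 0 := fun h => by simp [h] at hab
    have := tv_D_ab hN hA hB ha hb
    rwa [← abs_mul, abs_of_pos hab] at this
  · have hc0 : 0 < c := by linarith
    by_cases hb : b = 0
    · subst hb
      have := tv_D_a hN hA
      have h2 : a^2 ≤ c^2 * a^2 := le_mul_of_one_le_left (sq_nonneg a) (one_le_pow₀ hc)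
      simp only [abs_zero, add_zero]
      refine this.trans ?_
      have : (0:ℝ)^2 / c^2 = 0 := by simp
      rw [this]; linarith
    · by_cases ha : a = 0
      · subst ha
        have hc1 : c = 1 := by simpa using hq
        subst hc1
        have := tv_D_a hN hB
        simpa using this
      · refine (tv_D_ab hN hA hB ha hb).trans ?_
        have h1 : 0 ≤ (c * |a| - |b| / c)^2 := sq_nonneg _
        have h2 : (c * |a| - |b| / c)^2 = c^2 * |a|^2 + |b|^2 / c^2 - 2 * (|a| * |b|) := by field_simp; ring
        rw [h2, sq_abs, sq_abs] at h1
        linarith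


lemma tv_hasSum_conv {α β : Type*} [AddCommMonoid α] [TopologicalSpace α] {f g : β → α} {a b : α}
    (h : HasSum f a) (hf : ∀ x, g x = f x) (hb : b = a) : HasSum g b := by
  rw [hb, show g = f from funext hf]; exact h

lemma tv_cos_tendsto (a : UnitAddCircle) :
    Filter.Tendsto (HurwitzZeta.cosKernel a) Filter.atTop (nhds 1) := by
  obtain ⟨p, hp, hO⟩ := HurwitzZeta.isBigO_atTop_cosKernel_sub a
  have h1 : Filter.Tendsto (fun x : ℝ => Real.exp (-p * x)) Filter.atTop (nhds 0) :=
    Real.tendsto_exp_atBot.comp (Filter.Tendsto.const_mul_atTop_of_neg (by linarith) Filter.tendsto_id)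
  have h2 := hO.trans_tendsto h1
  simpa using h2.add_const 1

lemma tv_gauss_hasSum {N : ℕ} (hN : 0 < N) (h : ℝ) {v c : ℝ} (hv : 0 < v) (hc : 0 < c) :
    HasSum (fun n : ℤ => (1 / c) * (Real.exp (-2 * Real.pi * v * (((N : ℝ) * n + h) / c)^2) / (Real.pi * Real.sqrt (2 * v))))
      (1 / (2 * Real.pi * v * N) * HurwitzZeta.cosKernel ((h / N : ℝ) : UnitAddCircle) (c^2 / (2 * v * N^2))) := by
  have hN' : (0:ℝ) < N := by exact_mod_cast hN
  have ht : 0 < 2 * v * N^2 / c^2 := by positivity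
  have h1 := (HurwitzZeta.hasSum_int_evenKernel (h / N) ht).mul_left (1 / c / (Real.pi * Real.sqrt (2 * v)))
  rw [HurwitzZeta.evenKernel_functional_equation] at h1
  refine tv_hasSum_conv h1 ?_ ?_
  · intro n
    have : -2 * Real.pi * v * (((N : ℝ) * n + h) / c)^2 = -Real.pi * (n + h / N)^2 * (2 * v * N^2 / c^2) := by
      field_simp
    rw [this]; ring
  · rw [← Real.sqrt_eq_rpow, one_div_div, Real.sqrt_div (by positivity), Real.sqrt_mul (x := 2 * v) (by positivity) ((N : ℝ)^2), Real.sqrt_sq hN'.le, Real.sqrt_sq hc.le]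
    generalize HurwitzZeta.cosKernel _ _ = κ
    have hs : Real.sqrt (2 * v) * Real.sqrt (2 * v) = 2 * v := Real.mul_self_sqrt (by positivity)
    have hs0 : Real.sqrt (2 * v) ≠ 0 := by positivity
    generalize Real.sqrt (2 * v) = s at *
    have hv' : v = s * s / 2 := by linarith
    subst hv'
    field_simp

lemma tvf_summable_one {N : ℕ} (hN : 0 < N) {h : ℝ} (hh : ∃ k : ℤ, h = (k : ℝ) / N) {τ : ℂ} (hτ : 0 < τ.im) :
    Summable (tvf N h τ 1) :=
  Summable.of_norm_bounded (tvMaj_summable N hN h hτ) fun q => tvf_bound hN hh hτ le_rfl q (Or.inr rfl)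

lemma tvf_tsum_one {N : ℕ} (hN : 0 < N) {h : ℝ} (hh : ∃ k : ℤ, h = (k : ℝ) / N) {τ : ℂ} (hτ : 0 < τ.im) :
    ∑' q, tvf N h τ 1 q = 2 * (I * eta3 τ) * ∑' n : ℤ, gfun τ ((N : ℝ) * n + h) := by
  rw [(tvf_summable_one hN hh hτ).tsum_prod, ← tsum_mul_left]
  refine tsum_congr fun n => ?_
  rw [← tv_g_identity hτ]
  rfl

noncomputable def tvf0 (N : ℕ) (h : ℝ) (τ : ℂ) (c : ℝ) (q : ℤ × ℤ) : ℂ :=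
  if tva N h q = 0 then tvf N h τ c q else 0
noncomputable def tvf1 (N : ℕ) (h : ℝ) (τ : ℂ) (c : ℝ) (q : ℤ × ℤ) : ℂ :=
  if tva N h q = 0 then 0 else tvf N h τ c q

lemma tvf1_bound {N : ℕ} (hN : 0 < N) {h : ℝ} (hh : ∃ k : ℤ, h = (k : ℝ) / N) {τ : ℂ} (hτ : 0 < τ.im)
    {c : ℝ} (hc : 1 ≤ c) (q : ℤ × ℤ) : ‖tvf1 N h τ c q‖ ≤ tvMaj N h τ.im q := by
  rw [tvf1]
  split_ifs with ha
  · rw [norm_zero, tvMaj]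
    positivity
  · exact tvf_bound hN hh hτ hc q (Or.inl ha)

lemma tvf1_tendsto {N : ℕ} (hN : 0 < N) {h : ℝ} (hh : ∃ k : ℤ, h = (k : ℝ) / N) {τ : ℂ} (hτ : 0 < τ.im) :
    Filter.Tendsto (fun c => ∑' q, tvf1 N h τ c q) Filter.atTop (nhds 0) := by
  have := tendsto_tsum_of_dominated_convergence (𝓕 := Filter.atTop) (f := fun c q => tvf1 N h τ c q) (g := fun _ => 0)
    (tvMaj_summable N hN h hτ) (fun q => ?_) ?_
  · simpa using this
  · by_cases ha : tva N h q = 0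
    · simp [tvf1, ha]
    · have h1 : Filter.Tendsto (fun c => tvEE N h τ q * ((tvp τ.im c (tva N h q) (tvb N h q) - |tva N h q| : ℝ) : ℂ)) Filter.atTop
        (nhds (tvEE N h τ q * ((|tva N h q| - |tva N h q| : ℝ) : ℂ))) :=
        ((Complex.continuous_ofReal.tendsto _).comp ((tvp_tendsto hτ ha).sub_const _)).const_mul _
      simpa [tvf1, ha, tvf] using h1
  · filter_upwards [Filter.eventually_ge_atTop 1] with c hc q
    exact tvf1_bound hN hh hτ hc q

lemma tv_e_half_nonint {k : ℤ} : e (-(((k : ℝ) + 1/2 : ℝ) : ℂ) / 2) = - e ((((k : ℝ) + 1/2 : ℝ) : ℂ) / 2) := by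
  have : (-(((k : ℝ) + 1/2 : ℝ) : ℂ) / 2) = (((k : ℝ) + 1/2 : ℝ) : ℂ) / 2 + ((-k-1 : ℤ) : ℂ) + 1/2 := by
    push_cast; ring
  rw [this, tv_e_add, tv_e_add, tv_e_int, tv_e_half]; ring

lemma tvf0_hasSum_half {N : ℕ} (hN : 0 < N) (hNe : Even N) (k : ℤ) {τ : ℂ} (hτ : 0 < τ.im) {c : ℝ} (hc : 0 < c) :
    HasSum (tvf0 N ((k : ℝ) + 1/2) τ c)
      (- e ((((k : ℝ) + 1/2 : ℝ) : ℂ) / 2) * ((1 / (2 * Real.pi * τ.im * N) * HurwitzZeta.cosKernel ((((k : ℝ) + 1/2) / N : ℝ) : UnitAddCircle) (c^2 / (2 * τ.im * N^2)) : ℝ) : ℂ)) := by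
  set h : ℝ := (k : ℝ) + 1/2 with hh
  let ι : ℤ → ℤ × ℤ := fun n => (n, -1 - k - N * n)
  have hι : Function.Injective ι := fun a b hab => congrArg Prod.fst hab
  rw [← hι.hasSum_iff]
  · have h1 := (Complex.hasSum_ofReal.mpr (tv_gauss_hasSum hN h hτ hc)).mul_left (- e ((h : ℂ) / 2))
    refine tv_hasSum_conv h1 ?_ rfl
    intro n
    have ha : tva N h (ι n) = 0 := by simp only [tva, ι, hh]; push_cast; ring
    have hb : tvb N h (ι n) = -2 * ((N : ℝ) * n + h) := by simp only [tvb, ι, hh]; push_cast; ring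
    have hE : tvEE N h τ (ι n) = - e ((h : ℂ) / 2) := by
      rw [← tv_e_half_nonint, tvEE, tvW, ← tv_e_add]
      obtain ⟨r, hr⟩ := hNe
      have h2 : (-(((N : ℝ) * (ι n).1 + h : ℝ) : ℂ) ^ 2 * τ / 2 + ((((ι n).2 : ℂ) + 1 / 2) ^ 2 / 2 * τ + (((ι n).2 : ℂ) + 1 / 2) / 2)) = -(h : ℂ) / 2 + ((- r * n : ℤ) : ℂ) := by
        simp only [ι, hh, hr]; push_cast; ring
      rw [h2, tv_e_add, tv_e_int, mul_one]
    simp only [Function.comp, tvf0, ha, if_true, tvf, hE, hb, tvp]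
    congr 2
    rw [show (c * 0 - -2 * ((N : ℝ) * n + h) / c) / 2 = ((N : ℝ) * n + h) / c by ring]
    simp
  · intro q hq
    rw [tvf0, if_neg]
    intro ha
    apply hq
    refine ⟨q.1, ?_⟩
    ext
    · rfl
    · simp only [ι]
      simp only [tva, hh] at ha
      have : (q.2 : ℝ) = -1 - k - N * q.1 := by linarith
      exact_mod_cast this.symm

lemma tvf0_zero {N : ℕ} {h : ℝ} (hh : ¬ ∃ m : ℤ, h = (m : ℝ) + 1/2) (τ : ℂ) (c : ℝ) : tvf0 N h τ c = 0 := by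
  funext q
  rw [tvf0, if_neg]; rfl
  intro ha
  apply hh
  refine ⟨-1 - q.2 - N * q.1, ?_⟩
  simp only [tva] at ha
  push_cast; linarith

/-- limit value -/
noncomputable def tvL (N : ℕ) (h : ℝ) (τ : ℂ) : ℂ :=
  2 * (I * eta3 τ) * (∑' n : ℤ, gfun τ ((N : ℝ) * n + h)) +
    (if ∃ m : ℤ, h = (m : ℝ) + 1/2 then e ((h : ℂ) / 2) / (2 * Real.pi * τ.im * N) else 0)

lemma tvL_tendsto {N : ℕ} (hN : 0 < N) (hNe : Even N) {h : ℝ} (hh : ∃ k : ℤ, h = (k : ℝ) / N) {τ : ℂ} (hτ : 0 < τ.im) :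
    Filter.Tendsto (fun c => ∑' q, (tvf N h τ 1 q - tvf N h τ c q)) Filter.atTop (nhds (tvL N h τ)) := by
  have hN' : (0:ℝ) < N := by exact_mod_cast hN
  have s0 : ∃ S : ℝ → ℂ, (∀ c, 1 ≤ c → HasSum (tvf0 N h τ c) (S c)) ∧ Filter.Tendsto S Filter.atTop
      (nhds (-(if ∃ m : ℤ, h = (m : ℝ) + 1/2 then e ((h : ℂ) / 2) / (2 * Real.pi * τ.im * N) else 0))) := by
    split_ifs with hk
    · obtain ⟨k, rfl⟩ := hk
      refine ⟨_, fun c hc => tvf0_hasSum_half hN hNe k hτ (by linarith), ?_⟩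
      have h1 : Filter.Tendsto (fun c : ℝ => c^2 / (2 * τ.im * N^2)) Filter.atTop Filter.atTop :=
        (Filter.tendsto_pow_atTop two_ne_zero).atTop_div_const (by positivity)
      have h2 := (tv_cos_tendsto ((((k : ℝ) + 1/2) / N : ℝ) : UnitAddCircle)).comp h1
      have h3 := ((Complex.continuous_ofReal.tendsto _).comp (h2.const_mul (1 / (2 * Real.pi * τ.im * N)))).const_mul (- e ((((k : ℝ) + 1/2 : ℝ) : ℂ) / 2))
      have h4 : -(e ((((k : ℝ) + 1/2 : ℝ) : ℂ) / 2) / (2 * Real.pi * τ.im * N)) = -e ((((k : ℝ) + 1/2 : ℝ) : ℂ) / 2) * ((1 / (2 * Real.pi * τ.im * N) * 1 : ℝ) : ℂ) := by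
        push_cast; ring
      rw [h4]
      exact h3
    · refine ⟨fun _ => 0, fun c _ => ?_, by simp⟩
      rw [tvf0_zero hk]; exact hasSum_zero
  obtain ⟨S, hS, hSl⟩ := s0
  have h1 := ((tvf1_tendsto hN hh hτ).add hSl).const_sub (∑' q, tvf N h τ 1 q)
  rw [tvf_tsum_one hN hh hτ, zero_add, sub_neg_eq_add] at h1
  refine h1.congr' ?_
  filter_upwards [Filter.eventually_ge_atTop 1] with c hc
  have s1 : Summable (tvf1 N h τ c) := Summable.of_norm_bounded (tvMaj_summable N hN h hτ) fun q => tvf1_bound hN hh hτ hc q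
  have h2 := (tvf_summable_one hN hh hτ).hasSum.sub (s1.hasSum.add (hS c hc))
  rw [← tvf_tsum_one hN hh hτ, ← h2.tsum_eq]
  refine tsum_congr fun q => ?_
  congr 1
  rw [tvf0, tvf1]; split_ifs <;> simp


lemma tv_summable_exp_sq {ε α β : ℝ} (hε : 0 < ε) (hα : 1 ≤ α) :
    Summable (fun n : ℤ => Real.exp (-ε * (α * n + β)^2)) := by
  refine Summable.of_nonneg_of_le (fun _ => (Real.exp_pos _).le) (fun n => ?_)
    ((tv_summable_exp_abs (β := β) hε hα).mul_left (Real.exp ε))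
  rw [← Real.exp_add]
  apply Real.exp_le_exp.mpr
  have : |α * n + β| ≤ (α * n + β)^2 + 1 := by
    rw [← sq_abs]; nlinarith [sq_nonneg (|α * n + β| - 1), abs_nonneg (α * n + β)]
  nlinarith

lemma tv_summable_prod_sq (N : ℕ) (hN : 0 < N) (h : ℝ) {ε : ℝ} (hε : 0 < ε) :
    Summable (fun q : ℤ × ℤ => Real.exp (-ε * (((N : ℝ) * q.1 + h)^2 + ((q.2 : ℝ) + 1/2)^2))) := by
  have s1 := tv_summable_exp_sq (β := h) hε (show (1:ℝ) ≤ N by exact_mod_cast hN)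
  have s2 := tv_summable_exp_sq (α := 1) (β := 1/2) hε le_rfl
  refine (s1.mul_of_nonneg s2 (fun _ => (Real.exp_pos _).le) (fun _ => (Real.exp_pos _).le)).congr fun q => ?_
  rw [← Real.exp_add]; congr 1; ring

lemma tv_poisson1 {P : ℂ} (R U X : ℂ) (hP : 0 < P.re) :
    ∑' m : ℤ, e (((m : ℂ) + 1/2) / 2) * cexp (-Real.pi * (P * ((m : ℂ) + 1/2)^2 + 2 * R * ((m : ℂ) + 1/2) * X + U * X^2))
    = -(1 / P^(1/2 : ℂ)) * e (1/4) * ∑' m : ℤ, e (((m : ℂ) + 1/2) / 2) *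
      cexp (-Real.pi * (((m : ℂ) + 1/2)^2 / P + 2 * (I * ((m : ℂ) + 1/2) * R / P) * X + (U - R^2 / P) * X^2)) := by
  have hP0 : P ≠ 0 := fun h => by simp [h] at hP
  have h1 := Complex.tsum_exp_neg_quadratic hP (-P/2 - R * X + I / 2)
  rw [← (Equiv.neg ℤ).tsum_eq (fun n : ℤ => cexp (-Real.pi / P * ((n : ℂ) + I * (-P/2 - R * X + I / 2))^2))] at h1
  set C0 := -Real.pi * P / 4 - Real.pi * R * X + Real.pi * I / 2 - Real.pi * U * X^2 with hC0
  have h2 : ∀ m : ℤ, e (((m : ℂ) + 1/2) / 2) * cexp (-Real.pi * (P * ((m : ℂ) + 1/2)^2 + 2 * R * ((m : ℂ) + 1/2) * X + U * X^2)) = cexp C0 * cexp (-Real.pi * P * (m : ℂ)^2 + 2 * Real.pi * (-P/2 - R * X + I / 2) * m) := by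
    intro m
    rw [e, ← Complex.exp_add, ← Complex.exp_add, hC0]; congr 1; ring
  have h3 : ∀ m : ℤ, cexp C0 * cexp (-Real.pi / P * ((((Equiv.neg ℤ) m : ℤ) : ℂ) + I * (-P/2 - R * X + I / 2))^2) = -(e (1/4) * (e (((m : ℂ) + 1/2) / 2) *
      cexp (-Real.pi * (((m : ℂ) + 1/2)^2 / P + 2 * (I * ((m : ℂ) + 1/2) * R / P) * X + (U - R^2 / P) * X^2)))) := by
    intro m
    have h4 : e (((m : ℂ) + 1/2) / 2) = - e (-((m : ℂ) + 1/2) / 2) := by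
      have := tv_e_half_nonint (k := m)
      push_cast at this
      rw [this, neg_neg]
    rw [h4, e, e, ← Complex.exp_add, neg_mul, mul_neg, neg_neg, ← Complex.exp_add, ← Complex.exp_add]
    congr 1
    simp only [Equiv.neg_apply]
    push_cast
    rw [hC0]
    field_simp
    ring_nf
    simp only [I_sq, show I^3 = -I from I_pow_three, show I^4 = 1 from I_pow_four]
    ring
  rw [tsum_congr h2, tsum_mul_left, h1, ← mul_assoc, mul_comm (cexp C0), mul_assoc, ← tsum_mul_left, tsum_congr h3, tsum_neg, tsum_mul_left]
  ring

lemma tv_poisson2 {G : ℂ} (S : ℂ) (N : ℕ) (hN : 0 < N) (h : ℝ) (hG : 0 < G.re) :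
    ∑' n : ℤ, cexp (-Real.pi * (2 * S * (((N : ℝ) * n + h : ℝ) : ℂ) + G * (((N : ℝ) * n + h : ℝ) : ℂ)^2))
    = 1 / (G * N^2)^(1/2 : ℂ) * ∑' l : ℤ, e (h * (l / N)) * cexp (-Real.pi / G * ((l : ℂ) / N - I * S)^2) := by
  have hG0 : G ≠ 0 := fun h => by simp [h] at hG
  have hN' : (0:ℝ) < N := by exact_mod_cast hN
  have hN0 : (N : ℂ) ≠ 0 := by exact_mod_cast hN.ne'
  have hP : 0 < (G * N^2).re := by
    have : (G * N^2) = (((N:ℝ)^2 : ℝ) : ℂ) * G := by push_cast; ring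
    rw [this, Complex.re_ofReal_mul]; positivity
  have h1 := Complex.tsum_exp_neg_quadratic hP (N * (-S - G * h))
  set C0 := -Real.pi * (2 * S * h + G * h^2) with hC0
  have h2 : ∀ n : ℤ, cexp (-Real.pi * (2 * S * (((N : ℝ) * n + h : ℝ) : ℂ) + G * (((N : ℝ) * n + h : ℝ) : ℂ)^2)) = cexp C0 * cexp (-Real.pi * (G * N^2) * (n : ℂ)^2 + 2 * Real.pi * (N * (-S - G * h)) * n) := by
    intro m
    rw [← Complex.exp_add, hC0]; congr 1; push_cast; ring
  have h3 : ∀ l : ℤ, cexp C0 * cexp (-Real.pi / (G * N^2) * ((l : ℂ) + I * (N * (-S - G * h)))^2) = e (h * (l / N)) * cexp (-Real.pi / G * ((l : ℂ) / N - I * S)^2) := by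
    intro l
    rw [e, ← Complex.exp_add, ← Complex.exp_add, hC0]
    congr 1
    field_simp
    ring_nf
    simp only [I_sq]
    ring
  rw [tsum_congr h2, tsum_mul_left, h1, ← mul_assoc, mul_comm (cexp C0), mul_assoc, ← tsum_mul_left, tsum_congr h3]

lemma tv_tsum_residue {K : ℕ} (hK : 0 < K) {f : ℤ → ℂ} (hf : Summable f) :
    ∑' l, f l = ∑ j ∈ Finset.range K, ∑' n : ℤ, f (K * n + j) := by
  haveI : NeZero K := ⟨hK.ne'⟩
  rw [← (Int.divModEquiv K).symm.tsum_eq f]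
  have hs : Summable (fun p : ℤ × Fin K => f ((Int.divModEquiv K).symm p)) := (Int.divModEquiv K).symm.summable_iff.mpr hf
  have hs2 : Summable (fun p : Fin K × ℤ => f ((Int.divModEquiv K).symm p.swap)) := (Equiv.prodComm _ _).summable_iff.mpr hs
  rw [← (Equiv.prodComm (Fin K) ℤ).tsum_eq, Finset.sum_range]
  rw [show (∑' p : Fin K × ℤ, f ((Int.divModEquiv K).symm ((Equiv.prodComm (Fin K) ℤ) p))) = ∑' p : Fin K × ℤ, f ((Int.divModEquiv K).symm p.swap) from rfl]
  rw [hs2.tsum_prod, tsum_fintype]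
  refine Finset.sum_congr rfl fun j _ => tsum_congr fun n => ?_
  congr 1
  simp [Int.divModEquiv]
  ring


noncomputable def tvMc (c M X : ℝ) : ℝ := (c * (M + X) + (M - X) / c) / 2
noncomputable def tvXc (c M X : ℝ) : ℝ := (c * (M + X) - (M - X) / c) / 2
noncomputable def tvPsi (c : ℝ) (μ ν : ℂ) (M X : ℝ) : ℂ :=
  cexp (-Real.pi * (μ * (tvMc c M X : ℂ)^2 + ν * (tvXc c M X : ℂ)^2))
noncomputable def tvG (N : ℕ) (h c : ℝ) (μ ν : ℂ) (q : ℤ × ℤ) : ℂ :=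
  e (((q.2 : ℂ) + 1/2) / 2) * tvPsi c μ ν ((q.2 : ℝ) + 1/2) ((N : ℝ) * q.1 + h)

lemma tv_Q_lower {C c M X : ℝ} (hC : 0 < C) (hc1 : 1 / C ≤ c) (hc2 : c ≤ C) :
    (X^2 + M^2) / C^2 ≤ (tvMc c M X)^2 + (tvXc c M X)^2 := by
  have hc : 0 < c := lt_of_lt_of_le (by positivity) hc1
  have h1 : (tvMc c M X)^2 + (tvXc c M X)^2 = (c^2 * (M + X)^2 + (1/c)^2 * (M - X)^2) / 2 := by
    rw [tvMc, tvXc]; field_simp; ring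
  have h2 : (1/C)^2 ≤ c^2 := by gcongr
  have h3 : (1/C)^2 ≤ (1/c)^2 := by gcongr
  rw [h1]
  calc (X^2 + M^2) / C^2 = ((1/C)^2 * (M + X)^2 + (1/C)^2 * (M - X)^2) / 2 := by field_simp; ring
    _ ≤ _ := by gcongr

lemma tvPsi_norm (c : ℝ) (μ ν : ℂ) (M X : ℝ) :
    ‖tvPsi c μ ν M X‖ = Real.exp (-Real.pi * (μ.re * (tvMc c M X)^2 + ν.re * (tvXc c M X)^2)) := by
  rw [tvPsi, Complex.norm_exp]; congr 1
  have : (-Real.pi * (μ * (tvMc c M X : ℂ)^2 + ν * (tvXc c M X : ℂ)^2)) = ((-Real.pi * (tvMc c M X)^2 : ℝ) : ℂ) * μ + ((-Real.pi * (tvXc c M X)^2 : ℝ) : ℂ) * ν := by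
    push_cast; ring
  rw [this, Complex.add_re, Complex.re_ofReal_mul, Complex.re_ofReal_mul]; ring

lemma tvPsi_norm_le {C c ρ : ℝ} {μ ν : ℂ} {M X : ℝ} (hC : 0 < C) (hc1 : 1 / C ≤ c) (hc2 : c ≤ C) (hρ : 0 < ρ)
    (hμ : ρ ≤ μ.re) (hν : ρ ≤ ν.re) : ‖tvPsi c μ ν M X‖ ≤ Real.exp (-(Real.pi * ρ / C^2) * (X^2 + M^2)) := by
  rw [tvPsi_norm]
  apply Real.exp_le_exp.mpr
  have h1 := tv_Q_lower (M := M) (X := X) hC hc1 hc2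
  have h2 : ρ * ((tvMc c M X)^2 + (tvXc c M X)^2) ≤ μ.re * (tvMc c M X)^2 + ν.re * (tvXc c M X)^2 := by
    nlinarith [mul_le_mul_of_nonneg_right hμ (sq_nonneg (tvMc c M X)), mul_le_mul_of_nonneg_right hν (sq_nonneg (tvXc c M X))]
  have h3 := mul_le_mul_of_nonneg_left ((mul_le_mul_of_nonneg_left h1 hρ.le).trans h2) Real.pi_pos.le
  have h4 : Real.pi * ρ / C^2 * (X^2 + M^2) = Real.pi * (ρ * ((X^2 + M^2) / C^2)) := by ring
  linarith

lemma tvPsi_bound {c : ℝ} (hc : 0 < c) {μ ν : ℂ} (hμ : 0 < μ.re) (hν : 0 < ν.re) :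
    ∃ ε : ℝ, 0 < ε ∧ ∀ M X, ‖tvPsi c μ ν M X‖ ≤ Real.exp (-ε * (X^2 + M^2)) := by
  have hC : 0 < max c (1/c) := lt_max_of_lt_left hc
  refine ⟨Real.pi * (min μ.re ν.re) / (max c (1/c))^2, ?_, fun M X => ?_⟩
  · have := lt_min hμ hν
    positivity
  · refine tvPsi_norm_le hC ?_ (le_max_left _ _) (lt_min hμ hν) (min_le_left _ _) (min_le_right _ _)
    rw [div_le_iff₀ hC]
    have := le_max_right c (1/c)
    calc 1 = c * (1/c) := by field_simp
      _ ≤ _ := by gcongr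

lemma tv_e_real_norm (x : ℝ) : ‖e (x : ℂ)‖ = 1 := by rw [tv_e_norm]; simp

lemma tv_eM_norm (m : ℤ) : ‖e (((m : ℂ) + 1/2) / 2)‖ = 1 := by
  have : (((m : ℂ) + 1/2) / 2) = ((((m : ℝ) + 1/2) / 2 : ℝ) : ℂ) := by push_cast; ring
  rw [this, tv_e_real_norm]

lemma tvG_summable {N : ℕ} (hN : 0 < N) (h : ℝ) {c : ℝ} (hc : 0 < c) {μ ν : ℂ} (hμ : 0 < μ.re) (hν : 0 < ν.re) :
    Summable (tvG N h c μ ν) := by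
  obtain ⟨ε, hε, hb⟩ := tvPsi_bound hc hμ hν
  refine Summable.of_norm_bounded (tv_summable_prod_sq N hN h hε) fun q => ?_
  rw [tvG, norm_mul, tv_eM_norm, one_mul]
  exact hb _ _

lemma tv_re_formula (P R U : ℂ) (M X : ℝ) (hP : 0 < P.re) :
    ((M : ℂ)^2 / P + 2 * (I * M * R / P) * X + (U - R^2 / P) * X^2).re =
      P.re / normSq P * (M + (R.re * P.im / P.re - R.im) * X)^2 + (U.re - R.re^2 / P.re) * X^2 := by
  have hn : normSq P = P.re * P.re + P.im * P.im := normSq_apply P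
  have hn0 : 0 < normSq P := by rw [hn]; nlinarith [mul_pos hP hP, mul_self_nonneg P.im]
  have h1 : ((M : ℂ)^2 / P + 2 * (I * M * R / P) * X + (U - R^2 / P) * X^2) = (((1 / normSq P : ℝ) : ℂ)) * ((M + I * R * X)^2 * (starRingEnd ℂ) P) + ((X^2 : ℝ) : ℂ) * U := by
    have hP0 : P ≠ 0 := fun h => by simp [h] at hP
    have : ((normSq P : ℝ) : ℂ) = P * (starRingEnd ℂ) P := (Complex.mul_conj P).symm
    have hc0 : (starRingEnd ℂ) P ≠ 0 := by simpa using hP0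
    push_cast
    rw [this]
    field_simp
    ring_nf
    simp only [I_sq]
    ring
  rw [h1, Complex.add_re, Complex.re_ofReal_mul, Complex.re_ofReal_mul]
  have h2 : ((M + I * R * X)^2 * (starRingEnd ℂ) P).re = ((M - R.im * X)^2 - (R.re * X)^2) * P.re + 2 * (M - R.im * X) * (R.re * X) * P.im := by
    simp [pow_two]; ring
  rw [h2]
  rw [hn] at hn0 ⊢
  field_simp
  ring

lemma tv_swap_bound {α β s : ℝ} (hα : 0 < α) (hβ : 0 < β) :
    ∃ ε : ℝ, 0 < ε ∧ ∀ M X : ℝ, ε * (X^2 + M^2) ≤ α * (M + s * X)^2 + β * X^2 := by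
  refine ⟨min (α/2) (β / (2 * s^2 + 1)), lt_min (by positivity) (by positivity), fun M X => ?_⟩
  set ε := min (α/2) (β / (2 * s^2 + 1)) with hε
  have h0 : 0 < ε := lt_min (by positivity) (by positivity)
  have h1 : 2 * ε ≤ α := by have := min_le_left (α/2) (β / (2 * s^2 + 1)); linarith
  have h2 : ε * (2 * s^2 + 1) ≤ β := by
    have := min_le_right (α/2) (β / (2 * s^2 + 1))
    rwa [le_div_iff₀ (by positivity)] at this
  have h3 : M^2 ≤ 2 * (M + s * X)^2 + 2 * (s * X)^2 := by nlinarith [sq_nonneg (M + s * X + s * X)]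
  calc ε * (X^2 + M^2) ≤ ε * (X^2 + (2 * (M + s * X)^2 + 2 * (s * X)^2)) := by gcongr
    _ = 2 * ε * (M + s * X)^2 + ε * (2 * s^2 + 1) * X^2 := by ring
    _ ≤ _ := by gcongr


noncomputable def tvP (c : ℝ) (μ ν : ℂ) : ℂ := μ * (((c + 1/c) / 2 : ℝ) : ℂ)^2 + ν * (((c - 1/c) / 2 : ℝ) : ℂ)^2

lemma tvP_re {c : ℝ} (hc : 0 < c) {μ ν : ℂ} (hμ : 0 < μ.re) (hν : 0 < ν.re) : 0 < (tvP c μ ν).re := by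
  have : tvP c μ ν = ((((c + 1/c) / 2)^2 : ℝ) : ℂ) * μ + ((((c - 1/c) / 2)^2 : ℝ) : ℂ) * ν := by
    rw [tvP]; push_cast; ring
  rw [this, Complex.add_re, Complex.re_ofReal_mul, Complex.re_ofReal_mul]
  have : 0 < ((c + 1/c) / 2)^2 := by positivity
  positivity

lemma tvP_inv (c : ℝ) {μ ν : ℂ} (hμ : μ ≠ 0) (hν : ν ≠ 0) : tvP c (1/ν) (1/μ) = tvP c μ ν / (μ * ν) := by
  rw [tvP, tvP]; field_simp

lemma tv_inv_re {z : ℂ} (hz : 0 < z.re) : 0 < (1/z).re := by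
  have h0 : z ≠ 0 := fun h => by simp [h] at hz
  rw [one_div, Complex.inv_re]
  have := Complex.normSq_pos.mpr h0
  positivity

lemma tv_ne_of_re {z : ℂ} (hz : 0 < z.re) : z ≠ 0 := fun h => by simp [h] at hz

lemma tvG2_re {c : ℝ} (hc : 0 < c) {μ ν : ℂ} (hμ : 0 < μ.re) (hν : 0 < ν.re) : 0 < (μ * ν / tvP c μ ν).re := by
  have h1 := tvP_re hc (tv_inv_re hν) (tv_inv_re hμ)
  have h2 := tv_inv_re h1
  rwa [tvP_inv c (tv_ne_of_re hμ) (tv_ne_of_re hν), one_div_div] at h2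

noncomputable def tvkappa (N : ℕ) (c : ℝ) (μ ν : ℂ) : ℂ :=
  (1 / (tvP c μ ν)^(1/2 : ℂ)) * (1 / (μ * ν / tvP c μ ν * N^2)^(1/2 : ℂ))

lemma tv_poisson_W {N : ℕ} (hN : 0 < N) {h : ℝ} (hh : ∃ k : ℤ, h = (k : ℝ) / N) {c : ℝ} (hc : 0 < c)
    {μ ν : ℂ} (hμ : 0 < μ.re) (hν : 0 < ν.re) :
    ∑' q, tvG N h c μ ν q = - tvkappa N c μ ν * e (1/4) *
      ∑ j ∈ Finset.range (N^2), e ((h * j / N : ℝ) : ℂ) * ∑' q, tvG N ((j : ℝ) / N) c (1/μ) (1/ν) q := by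
  have hN' : (0:ℝ) < N := by exact_mod_cast hN
  have hN0 : (N : ℂ) ≠ 0 := by exact_mod_cast hN.ne'
  have hcC : (c : ℂ) ≠ 0 := by exact_mod_cast hc.ne'
  have hμ0 := tv_ne_of_re hμ
  have hν0 := tv_ne_of_re hν
  have hP := tvP_re hc hμ hν
  have hP0 := tv_ne_of_re hP
  have hG := tvG2_re hc hμ hν
  set ch : ℝ := (c + 1/c)/2 with hch
  set sh : ℝ := (c - 1/c)/2 with hsh
  have hcs : ch^2 - sh^2 = 1 := by rw [hch, hsh]; field_simp; ring
  have hcsC : (ch : ℂ)^2 - (sh : ℂ)^2 = 1 := by exact_mod_cast hcs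
  have hMc : ∀ M X, tvMc c M X = M * ch + X * sh := fun M X => by rw [tvMc, hch, hsh]; field_simp; ring
  have hXc : ∀ M X, tvXc c M X = M * sh + X * ch := fun M X => by rw [tvXc, hch, hsh]; field_simp; ring
  set P := tvP c μ ν with hPdef
  have hPe : P = μ * (ch : ℂ)^2 + ν * (sh : ℂ)^2 := rfl
  set R : ℂ := (μ + ν) * ch * sh with hR
  set U : ℂ := μ * (sh : ℂ)^2 + ν * (ch : ℂ)^2 with hU
  have hPU : P * U - R^2 = μ * ν := by
    rw [hPe, hU, hR]
    linear_combination (μ * ν) * ((ch : ℂ)^2 - (sh : ℂ)^2 + 1) * hcsC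
  have hGe : U - R^2 / P = μ * ν / P := by
    rw [← hPU]; field_simp
  -- step 1
  have e1 : ∀ n : ℤ, ∑' m : ℤ, tvG N h c μ ν (n, m) = -(1 / P^(1/2 : ℂ)) * e (1/4) *
      ∑' m : ℤ, e (((m : ℂ) + 1/2) / 2) *
      cexp (-Real.pi * (((m : ℂ) + 1/2)^2 / P + 2 * (I * ((m : ℂ) + 1/2) * R / P) * (((N : ℝ) * n + h : ℝ) : ℂ) + (U - R^2 / P) * (((N : ℝ) * n + h : ℝ) : ℂ)^2)) := by
    intro n
    rw [← tv_poisson1 R U _ hP]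
    refine tsum_congr fun m => ?_
    rw [tvG, tvPsi, hMc, hXc]
    congr 2
    rw [hPe, hR, hU]; push_cast; ring
  have hPsi' : ∀ (m l : ℤ), cexp (-Real.pi * (((m : ℂ) + 1/2)^2 / P)) * cexp (-Real.pi / (U - R^2 / P) * ((l : ℂ) / N - I * (I * ((m : ℂ) + 1/2) * R / P))^2)
      = tvPsi c (1/μ) (1/ν) ((m : ℝ) + 1/2) ((l : ℝ) / N) := by
    intro m l
    rw [tvPsi, hMc, hXc, ← Complex.exp_add, hGe]
    congr 1
    push_cast
    have hU' : U = (μ * ν + R^2) / P := by rw [← hPU]; field_simp; ring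
    have h3 : 1/μ * (((m : ℂ) + 1/2) * ch + l / N * sh)^2 + 1/ν * (((m : ℂ) + 1/2) * sh + l / N * ch)^2 = (U * ((m : ℂ) + 1/2)^2 + 2 * R * ((m : ℂ) + 1/2) * (l / N) + P * (l / N)^2) / (μ * ν) := by
      rw [hU, hR, hPe]; field_simp; ring
    rw [h3, hU', show (l : ℂ) / N - I * (I * ((m : ℂ) + 1/2) * R / P) = (l : ℂ) / N + ((m : ℂ) + 1/2) * R / P by
      linear_combination (-((m : ℂ) + 1/2) * R / P) * I_mul_I]
    field_simp
    ring
  -- swap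
  have hsw : Summable (fun q : ℤ × ℤ => e (((q.2 : ℂ) + 1/2) / 2) *
      cexp (-Real.pi * (((q.2 : ℂ) + 1/2)^2 / P + 2 * (I * ((q.2 : ℂ) + 1/2) * R / P) * (((N : ℝ) * q.1 + h : ℝ) : ℂ) + (U - R^2 / P) * (((N : ℝ) * q.1 + h : ℝ) : ℂ)^2))) := by
    have hβ : 0 < U.re - R.re^2 / P.re := by
      have a1 : P.re = ch^2 * μ.re + sh^2 * ν.re := by
        rw [show P = ((ch^2 : ℝ) : ℂ) * μ + ((sh^2 : ℝ) : ℂ) * ν by rw [hPe]; push_cast; ring, Complex.add_re, Complex.re_ofReal_mul, Complex.re_ofReal_mul]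
      have a2 : U.re = sh^2 * μ.re + ch^2 * ν.re := by
        rw [show U = ((sh^2 : ℝ) : ℂ) * μ + ((ch^2 : ℝ) : ℂ) * ν by rw [hU]; push_cast; ring, Complex.add_re, Complex.re_ofReal_mul, Complex.re_ofReal_mul]
      have a3 : R.re = (ch * sh) * (μ.re + ν.re) := by
        rw [show R = ((ch * sh : ℝ) : ℂ) * (μ + ν) by rw [hR]; push_cast; ring, Complex.re_ofReal_mul, Complex.add_re]
      have a4 : U.re - R.re^2 / P.re = μ.re * ν.re / P.re := by
        rw [eq_div_iff hP.ne', sub_mul, div_mul_cancel₀ _ hP.ne', a1, a2, a3]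
        linear_combination (μ.re * ν.re) * (ch^2 - sh^2 + 1) * hcs
      rw [a4]; positivity
    have hα : 0 < P.re / normSq P := div_pos hP (normSq_pos.mpr hP0)
    obtain ⟨ε, hε, hb⟩ := tv_swap_bound (s := R.re * P.im / P.re - R.im) hα hβ
    refine Summable.of_norm_bounded (tv_summable_prod_sq N hN h (mul_pos Real.pi_pos hε)) fun q => ?_
    rw [norm_mul, tv_eM_norm, one_mul, Complex.norm_exp]
    apply Real.exp_le_exp.mpr
    have h1 := tv_re_formula P R U ((q.2 : ℝ) + 1/2) ((N : ℝ) * q.1 + h) hP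
    have h2 := hb ((q.2 : ℝ) + 1/2) ((N : ℝ) * q.1 + h)
    rw [← h1] at h2
    rw [show (-(Real.pi : ℂ)) = ((-Real.pi : ℝ) : ℂ) by push_cast; rfl, Complex.re_ofReal_mul]
    have h3 := mul_le_mul_of_nonneg_left h2 Real.pi_pos.le
    push_cast at h3 ⊢
    linarith
  rw [(tvG_summable hN h hc hμ hν).tsum_prod, tsum_congr e1, tsum_mul_left,
    ← Summable.tsum_comm (f := fun n m : ℤ => e (((m : ℂ) + 1/2) / 2) *
      cexp (-Real.pi * (((m : ℂ) + 1/2)^2 / P + 2 * (I * ((m : ℂ) + 1/2) * R / P) * (((N : ℝ) * n + h : ℝ) : ℂ) + (U - R^2 / P) * (((N : ℝ) * n + h : ℝ) : ℂ)^2))) hsw]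
  have hμi := tv_inv_re hμ
  have hνi := tv_inv_re hν
  have e2 : ∀ m : ℤ, ∑' n : ℤ, e (((m : ℂ) + 1/2) / 2) *
      cexp (-Real.pi * (((m : ℂ) + 1/2)^2 / P + 2 * (I * ((m : ℂ) + 1/2) * R / P) * (((N : ℝ) * n + h : ℝ) : ℂ) + (U - R^2 / P) * (((N : ℝ) * n + h : ℝ) : ℂ)^2))
      = 1 / (μ * ν / P * N^2)^(1/2 : ℂ) * ∑ j ∈ Finset.range (N^2), e ((h * j / N : ℝ) : ℂ) * ∑' n : ℤ, tvG N ((j : ℝ) / N) c (1/μ) (1/ν) (n, m) := by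
    intro m
    have h1 := tv_poisson2 (I * ((m : ℂ) + 1/2) * R / P) N hN h (show 0 < (U - R^2/P).re by rw [hGe]; exact hG)
    have h2 : ∀ n : ℤ, e (((m : ℂ) + 1/2) / 2) *
      cexp (-Real.pi * (((m : ℂ) + 1/2)^2 / P + 2 * (I * ((m : ℂ) + 1/2) * R / P) * (((N : ℝ) * n + h : ℝ) : ℂ) + (U - R^2 / P) * (((N : ℝ) * n + h : ℝ) : ℂ)^2)) = (e (((m : ℂ) + 1/2) / 2) * cexp (-Real.pi * (((m : ℂ) + 1/2)^2 / P))) * cexp (-Real.pi * (2 * (I * ((m : ℂ) + 1/2) * R / P) * (((N : ℝ) * n + h : ℝ) : ℂ) + (U - R^2 / P) * (((N : ℝ) * n + h : ℝ) : ℂ)^2)) := by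
      intro n
      rw [mul_assoc (e _) (cexp _) (cexp _), ← Complex.exp_add]; congr 2; ring
    rw [tsum_congr h2, tsum_mul_left, h1, ← mul_assoc, mul_comm _ (1 / _), mul_assoc, ← tsum_mul_left, hGe]
    congr 1
    have h3 : ∀ l : ℤ, (e (((m : ℂ) + 1/2) / 2) * cexp (-Real.pi * (((m : ℂ) + 1/2)^2 / P))) * (e (h * (l / N)) * cexp (-Real.pi / (μ * ν / P) * ((l : ℂ) / N - I * (I * ((m : ℂ) + 1/2) * R / P))^2)) = e ((h * (l / N) : ℝ) : ℂ) * (e (((m : ℂ) + 1/2) / 2) * tvPsi c (1/μ) (1/ν) ((m : ℝ) + 1/2) ((l : ℝ) / N)) := by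
      intro l
      rw [← hPsi', hGe]; push_cast; ring
    rw [tsum_congr h3]
    rw [tv_tsum_residue (K := N^2) (by positivity)]
    · refine Finset.sum_congr rfl fun j _ => ?_
      rw [← tsum_mul_left]
      refine tsum_congr fun n => ?_
      rw [tvG]
      obtain ⟨k, hk⟩ := hh
      have hX : ((((N^2 : ℕ) : ℤ) * n + (j : ℤ) : ℤ) : ℝ) / N = (N : ℝ) * n + (j : ℝ) / N := by
        push_cast; field_simp
      have hE : e ((h * (((((N^2 : ℕ) : ℤ) * n + (j : ℤ) : ℤ) : ℝ) / N) : ℝ) : ℂ) = e ((h * j / N : ℝ) : ℂ) := by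
        rw [hX, show ((h * ((N : ℝ) * n + (j : ℝ) / N) : ℝ) : ℂ) = ((h * j / N : ℝ) : ℂ) + ((k * n : ℤ) : ℂ) by
          rw [hk]; push_cast; field_simp; ring, tv_e_add, tv_e_int, mul_one]
      rw [hE, hX]
    · obtain ⟨ε, hε, hb⟩ := tvPsi_bound hc hμi hνi
      have hε' : 0 < ε / N^2 := by positivity
      refine Summable.of_norm_bounded (tv_summable_exp_sq (α := 1) (β := 0) hε' le_rfl) fun l => ?_
      rw [norm_mul, norm_mul, tv_e_real_norm, tv_eM_norm, one_mul, one_mul]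
      refine (hb _ _).trans (Real.exp_le_exp.mpr ?_)
      have : ε / N^2 * (1 * (l : ℝ) + 0)^2 = ε * ((l : ℝ) / N)^2 := by field_simp; ring
      have h5 : 0 ≤ ε * ((m : ℝ) + 1/2)^2 := by positivity
      linarith
  rw [tsum_congr e2, tsum_mul_left]
  have hsumm : ∀ j : ℕ, Summable (fun m : ℤ => ∑' n : ℤ, tvG N ((j : ℝ) / N) c (1/μ) (1/ν) (n, m)) := fun j =>
    ((tvG_summable hN ((j : ℝ) / N) hc hμi hνi).prod_symm).prod
  rw [Summable.tsum_finsetSum (fun j _ => (hsumm j).mul_left _)]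
  rw [tvkappa, ← hPdef]
  have e3 : ∀ j : ℕ, ∑' m : ℤ, e ((h * j / N : ℝ) : ℂ) * ∑' n : ℤ, tvG N ((j : ℝ) / N) c (1/μ) (1/ν) (n, m) = e ((h * j / N : ℝ) : ℂ) * ∑' q, tvG N ((j : ℝ) / N) c (1/μ) (1/ν) q := by
    intro j
    rw [tsum_mul_left]; congr 1
    rw [← Summable.tsum_comm (f := fun m n : ℤ => tvG N ((j : ℝ) / N) c (1/μ) (1/ν) (n, m)) (tvG_summable hN ((j : ℝ) / N) hc hμi hνi).prod_symm]
    exact ((tvG_summable hN ((j : ℝ) / N) hc hμi hνi).tsum_prod).symm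
  rw [Finset.sum_congr rfl fun j _ => e3 j]
  ring


lemma tvPsi_sq_bound {C c ρ : ℝ} {μ ν : ℂ} {M X : ℝ} (hC : 0 < C) (hc1 : 1 / C ≤ c) (hc2 : c ≤ C) (hρ : 0 < ρ)
    (hμ : ρ ≤ μ.re) (hν : ρ ≤ ν.re) :
    (tvMc c M X)^2 * ‖tvPsi c μ ν M X‖ ≤ (2 / (Real.pi * ρ)) * Real.exp (-(Real.pi * (ρ/2) / C^2) * (X^2 + M^2)) := by
  rw [tvPsi_norm]
  have h1 := tv_Q_lower (M := M) (X := X) hC hc1 hc2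
  set x := (tvMc c M X)^2 with hx
  set y := (tvXc c M X)^2 with hy
  have hx0 : 0 ≤ x := sq_nonneg _
  have hy0 : 0 ≤ y := sq_nonneg _
  have hpr : 0 < Real.pi * ρ := mul_pos Real.pi_pos hρ
  have h2 : ρ * (x + y) ≤ μ.re * x + ν.re * y := by
    nlinarith [mul_le_mul_of_nonneg_right hμ hx0, mul_le_mul_of_nonneg_right hν hy0]
  set t := Real.pi * ρ / 2 * (x + y) with ht
  have h3 : Real.exp (-Real.pi * (μ.re * x + ν.re * y)) ≤ Real.exp (-t) * Real.exp (-t) := by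
    rw [← Real.exp_add]
    apply Real.exp_le_exp.mpr
    have := mul_le_mul_of_nonneg_left h2 Real.pi_pos.le
    rw [ht]; linarith
  have h4 : t ≤ Real.exp t := by linarith [Real.add_one_le_exp t]
  have h5 : x ≤ (2 / (Real.pi * ρ)) * Real.exp t := by
    calc x ≤ (2 / (Real.pi * ρ)) * t := by
          rw [ht]; field_simp; linarith
      _ ≤ _ := by gcongr
  calc x * Real.exp (-Real.pi * (μ.re * x + ν.re * y)) ≤ ((2 / (Real.pi * ρ)) * Real.exp t) * (Real.exp (-t) * Real.exp (-t)) := by gcongr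
    _ = (2 / (Real.pi * ρ)) * Real.exp (-t) := by
        have : Real.exp t * Real.exp (-t) = 1 := by rw [← Real.exp_add]; simp
        linear_combination (2 / (Real.pi * ρ)) * Real.exp (-t) * this
    _ ≤ _ := by
        gcongr
        rw [ht]
        have := mul_le_mul_of_nonneg_left h1 (by positivity : 0 ≤ Real.pi * ρ / 2)
        have h6 : Real.pi * (ρ/2) / C^2 * (X^2 + M^2) = Real.pi * ρ / 2 * ((X^2 + M^2) / C^2) := by ring
        linarith

/-- summand with `M_c²` -/
noncomputable def tvV (N : ℕ) (h c : ℝ) (μ ν : ℂ) (q : ℤ × ℤ) : ℂ :=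
  ((tvMc c ((q.2 : ℝ) + 1/2) ((N : ℝ) * q.1 + h))^2 : ℝ) * tvG N h c μ ν q

lemma tvV_norm (N : ℕ) (h c : ℝ) (μ ν : ℂ) (q : ℤ × ℤ) :
    ‖tvV N h c μ ν q‖ = (tvMc c ((q.2 : ℝ) + 1/2) ((N : ℝ) * q.1 + h))^2 * ‖tvPsi c μ ν ((q.2 : ℝ) + 1/2) ((N : ℝ) * q.1 + h)‖ := by
  rw [tvV, norm_mul, Complex.norm_real, Real.norm_eq_abs, abs_of_nonneg (sq_nonneg _), tvG, norm_mul, tv_eM_norm, one_mul]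

lemma tvW_hasDeriv {N : ℕ} (hN : 0 < N) (h : ℝ) {c : ℝ} (hc : 0 < c) {μ ν : ℂ} (hμ : 0 < μ.re) (hν : 0 < ν.re) :
    HasDerivAt (fun z => ∑' q, tvG N h c z ν q) (-Real.pi * ∑' q, tvV N h c μ ν q) μ := by
  have hC : 0 < max c (1/c) := lt_max_of_lt_left hc
  set C := max c (1/c) with hCd
  have hc1 : 1 / C ≤ c := by
    rw [div_le_iff₀ hC]
    have := le_max_right c (1/c)
    calc 1 = c * (1/c) := by field_simp
      _ ≤ _ := by gcongr
  have hc2 : c ≤ C := le_max_left _ _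
  set ρ := min (μ.re / 2) ν.re with hρd
  have hρ : 0 < ρ := lt_min (by linarith) hν
  have ht : IsOpen {z : ℂ | ρ < z.re} := isOpen_lt continuous_const Complex.continuous_re
  have ht' : IsPreconnected {z : ℂ | ρ < z.re} := (convex_halfSpace_re_gt ρ).isPreconnected
  have hmem : μ ∈ {z : ℂ | ρ < z.re} := by
    show ρ < μ.re
    exact lt_of_le_of_lt (min_le_left (μ.re/2) ν.re) (by linarith)
  have hs := (tv_summable_prod_sq N hN h (show 0 < Real.pi * (ρ/2) / C^2 by positivity)).mul_left (Real.pi * (2 / (Real.pi * ρ)))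
  have key := hasDerivAt_tsum_of_isPreconnected (g := fun q z => tvG N h c z ν q) (g' := fun q z => -Real.pi * tvV N h c z ν q)
    hs ht ht' ?_ ?_ hmem (tvG_summable hN h hc hμ hν) hmem
  · rw [tsum_mul_left] at key; exact key
  · intro q z _
    simp only [tvG, tvPsi, tvV]
    have h1 := ((((hasDerivAt_id z).mul_const ((tvMc c ((q.2 : ℝ) + 1/2) ((N : ℝ) * q.1 + h) : ℂ)^2)).add_const (ν * (tvXc c ((q.2 : ℝ) + 1/2) ((N : ℝ) * q.1 + h) : ℂ)^2)).const_mul (-(Real.pi : ℂ))).cexp.const_mul (e (((q.2 : ℂ) + 1/2) / 2))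
    refine h1.congr_deriv ?_
    simp only [id]
    push_cast; ring
  · intro q z hz
    rw [norm_mul, norm_neg, Complex.norm_real, Real.norm_of_nonneg Real.pi_pos.le, tvV_norm, mul_assoc]
    refine mul_le_mul_of_nonneg_left ?_ Real.pi_pos.le
    exact tvPsi_sq_bound hC hc1 hc2 hρ (le_of_lt hz) (min_le_right _ _)

lemma tv_csq {z : ℂ} (hz : z ≠ 0) : (z^(1/2 : ℂ)) * (z^(1/2 : ℂ)) = z := by
  rw [← Complex.cpow_add _ _ hz]; norm_num

lemma tvkappa_sq {N : ℕ} (hN : 0 < N) {c : ℝ} (hc : 0 < c) {μ ν : ℂ} (hμ : 0 < μ.re) (hν : 0 < ν.re) :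
    tvkappa N c μ ν * tvkappa N c μ ν = 1 / (μ * ν * N^2) := by
  have hP := tv_ne_of_re (tvP_re hc hμ hν)
  have hN0 : (N : ℂ) ≠ 0 := by exact_mod_cast hN.ne'
  have hμ0 := tv_ne_of_re hμ
  have hν0 := tv_ne_of_re hν
  have h1 := tv_csq hP
  have h2 := tv_csq (z := μ * ν / tvP c μ ν * N^2) (by positivity)
  rw [tvkappa]
  calc _ = 1 / (((tvP c μ ν)^(1/2 : ℂ) * (tvP c μ ν)^(1/2 : ℂ)) * ((μ * ν / tvP c μ ν * N^2)^(1/2 : ℂ) * (μ * ν / tvP c μ ν * N^2)^(1/2 : ℂ))) := by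
        simp only [one_div, mul_inv]; ring
    _ = _ := by rw [h1, h2]; field_simp

lemma tvkappa_deriv {N : ℕ} (hN : 0 < N) {c : ℝ} (hc : 0 < c) {μ ν : ℂ} (hμ : 0 < μ.re) (hν : 0 < ν.re) :
    HasDerivAt (fun z => tvkappa N c z ν) (-tvkappa N c μ ν / (2 * μ)) μ := by
  have hPr := tvP_re hc hμ hν
  have hP := tv_ne_of_re hPr
  have hN' : (0:ℝ) < N := by exact_mod_cast hN
  have hN0 : (N : ℂ) ≠ 0 := by exact_mod_cast hN.ne'
  have hμ0 := tv_ne_of_re hμ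
  have hν0 := tv_ne_of_re hν
  have hG := tvG2_re hc hμ hν
  have hGN : 0 < (μ * ν / tvP c μ ν * N^2).re := by
    have : (μ * ν / tvP c μ ν * N^2) = (((N:ℝ)^2 : ℝ) : ℂ) * (μ * ν / tvP c μ ν) := by push_cast; ring
    rw [this, Complex.re_ofReal_mul]; positivity
  have hd : DifferentiableAt ℂ (fun z => tvkappa N c z ν) μ := by
    have d1 : DifferentiableAt ℂ (fun z => tvP c z ν) μ := by
      unfold tvP; fun_prop
    have d2 : DifferentiableAt ℂ (fun z => z * ν / tvP c z ν * N^2) μ := by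
      refine DifferentiableAt.mul_const (DifferentiableAt.div (by fun_prop) d1 hP) _
    have d3 : DifferentiableAt ℂ (fun z => (tvP c z ν)^(1/2 : ℂ)) μ := d1.cpow_const (Or.inl hPr)
    have d4 : DifferentiableAt ℂ (fun z => (z * ν / tvP c z ν * N^2)^(1/2 : ℂ)) μ := d2.cpow_const (Or.inl hGN)
    unfold tvkappa
    refine DifferentiableAt.mul (DifferentiableAt.div (by fun_prop) d3 ?_) (DifferentiableAt.div (by fun_prop) d4 ?_)
    · rw [Complex.cpow_ne_zero_iff]; exact Or.inl hP
    · rw [Complex.cpow_ne_zero_iff]; exact Or.inl (tv_ne_of_re hGN)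
  have h1 := hd.hasDerivAt.mul hd.hasDerivAt
  have h2 : HasDerivAt (fun z => 1 / (z * ν * N^2)) (-1 / (μ^2 * ν * N^2)) μ := by
    have h := (((hasDerivAt_id μ).mul_const ν).mul_const ((N : ℂ)^2)).inv (show id μ * ν * (N : ℂ)^2 ≠ 0 by simp only [id]; positivity)
    have h' : (fun z => 1 / (z * ν * (N : ℂ)^2)) = (fun z => id z * ν * (N : ℂ)^2)⁻¹ := by
      funext z; simp
    rw [h']
    refine h.congr_deriv ?_
    simp only [id]; field_simp
  have hev : (fun z => 1 / (z * ν * N^2)) =ᶠ[nhds μ] ((fun z => tvkappa N c z ν) * (fun z => tvkappa N c z ν)) := by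
    filter_upwards [(isOpen_lt continuous_const Complex.continuous_re).mem_nhds hμ] with z hz
    exact (tvkappa_sq hN hc hz hν).symm
  have h3 := (h2.congr_of_eventuallyEq hev.symm).unique h1
  have hk := tvkappa_sq hN hc hμ hν
  have hk0 : tvkappa N c μ ν ≠ 0 := by
    intro h0; rw [h0, zero_mul] at hk
    have : (1:ℂ) / (μ * ν * N^2) ≠ 0 := one_div_ne_zero (mul_ne_zero (mul_ne_zero hμ0 hν0) (pow_ne_zero 2 hN0))
    exact this hk.symm
  refine hd.hasDerivAt.congr_deriv ?_
  have h4 : -1 / (μ^2 * ν * N^2) = -(1 / (μ * ν * N^2)) / μ := by field_simp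
  rw [h4, ← hk] at h3
  rw [eq_div_iff (mul_ne_zero two_ne_zero hμ0)]
  field_simp at h3
  linear_combination -h3


lemma tvkappa_val {N : ℕ} {c : ℝ} (hc : 0 < c) {μ ν : ℂ} (hμ : 0 < μ.re) (hν : 0 < ν.re)
    {s : ℝ} (hs : 0 < s) (h : μ * ν * N^2 = ((s^2 : ℝ) : ℂ)) : tvkappa N c μ ν = 1 / (s : ℂ) := by
  have hPr := tvP_re hc hμ hν
  have hP := tv_ne_of_re hPr
  have hs2 : (0:ℝ) < s^2 := by positivity
  have h1 : μ * ν / tvP c μ ν * N^2 = ((s^2 : ℝ) : ℂ) * (tvP c μ ν)⁻¹ := by rw [← h]; field_simp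
  have harg : (tvP c μ ν).arg ≠ Real.pi := by
    intro h0
    have := Complex.arg_eq_pi_iff.mp h0
    linarith [this.1]
  have hne : ((s^2 : ℝ) : ℂ) * (tvP c μ ν)⁻¹ ≠ 0 := mul_ne_zero (by exact_mod_cast hs2.ne') (inv_ne_zero hP)
  rw [tvkappa, h1, one_div_mul_one_div]
  congr 1
  rw [Complex.cpow_def_of_ne_zero hP, Complex.cpow_def_of_ne_zero hne, ← Complex.exp_add,
    Complex.log_ofReal_mul hs2 (inv_ne_zero hP), Complex.log_inv _ harg, Real.log_pow]
  have : Complex.log (tvP c μ ν) * (1/2) + (((((2:ℕ):ℝ) * Real.log s : ℝ) : ℂ) + -Complex.log (tvP c μ ν)) * (1/2) = ((Real.log s : ℝ) : ℂ) := by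
    push_cast; ring
  rw [this, ← Complex.ofReal_exp, Real.exp_log hs]

lemma tv_poisson_V {N : ℕ} (hN : 0 < N) {h : ℝ} (hh : ∃ k : ℤ, h = (k : ℝ) / N) {c : ℝ} (hc : 0 < c)
    {μ ν : ℂ} (hμ : 0 < μ.re) (hν : 0 < ν.re) :
    ∑' q, tvV N h c μ ν q = tvkappa N c μ ν * e (1/4) *
      ∑ j ∈ Finset.range (N^2), e ((h * j / N : ℝ) : ℂ) * (-(1/(2*Real.pi*μ)) * ∑' q, tvG N ((j : ℝ) / N) c (1/μ) (1/ν) q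
        + (1/μ^2) * ∑' q, tvV N ((j : ℝ) / N) c (1/μ) (1/ν) q) := by
  have hμ0 := tv_ne_of_re hμ
  have hpi : (Real.pi : ℂ) ≠ 0 := by exact_mod_cast Real.pi_ne_zero
  have h1 := tvW_hasDeriv hN h hc hμ hν
  have hinv : HasDerivAt (fun z : ℂ => 1/z) (-(1/μ^2)) μ := by
    have := hasDerivAt_inv hμ0
    have h' : (fun z : ℂ => 1/z) = Inv.inv := by funext z; simp
    rw [h']; refine this.congr_deriv ?_; simp
  have h2 : ∀ j ∈ Finset.range (N^2), HasDerivAt (fun z => e ((h * j / N : ℝ) : ℂ) * ∑' q, tvG N ((j : ℝ) / N) c (1/z) (1/ν) q)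
     (e ((h * j / N : ℝ) : ℂ) * ((-Real.pi * ∑' q, tvV N ((j : ℝ) / N) c (1/μ) (1/ν) q) * (-(1/μ^2)))) μ := by
    intro j _
    have := tvW_hasDeriv hN ((j : ℝ)/N) hc (tv_inv_re hμ) (tv_inv_re hν)
    exact (HasDerivAt.comp (h₂ := fun z => ∑' q, tvG N ((j : ℝ) / N) c z (1/ν) q) μ this hinv).const_mul _
  have h3 := ((tvkappa_deriv hN hc hμ hν).neg.mul_const (e (1/4))).mul (HasDerivAt.fun_sum h2)
  have h4 := h1.unique (h3.congr_of_eventuallyEq (by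
    filter_upwards [(isOpen_lt continuous_const Complex.continuous_re).mem_nhds hμ] with z hz
    exact tv_poisson_W hN hh hc hz hν))
  have h5 : ∑' q, tvV N h c μ ν q = -(1/Real.pi) * (-Real.pi * ∑' q, tvV N h c μ ν q) := by field_simp
  rw [h5, h4, Finset.mul_sum, Finset.mul_sum, Finset.mul_sum, ← Finset.sum_add_distrib, Finset.mul_sum]
  refine Finset.sum_congr rfl fun j _ => ?_
  field_simp
  simp only [Pi.neg_apply]
  ring

noncomputable def tvT (N : ℕ) (h c : ℝ) (τ : ℂ) : ℂ :=
  2 * (Real.sqrt (2 * τ.im) : ℂ) * ∑' q, tvV N h c (-I*τ) (I * (starRingEnd ℂ) τ) q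
   - (1/(Real.pi * Real.sqrt (2 * τ.im)) : ℝ) * ∑' q, tvG N h c (-I*τ) (I * (starRingEnd ℂ) τ) q

lemma tv_mu_re (τ : ℂ) : (-I*τ).re = τ.im := by simp
lemma tv_nu_re (τ : ℂ) : (I * (starRingEnd ℂ) τ).re = τ.im := by simp

lemma tvT_S {N : ℕ} (hN : 0 < N) {h : ℝ} (hh : ∃ k : ℤ, h = (k : ℝ) / N) {c : ℝ} (hc : 0 < c) {τ : ℂ} (hτ : 0 < τ.im) :
    tvT N h c (-1/τ) = -(I*τ^2/N) * ∑ j ∈ Finset.range (N^2), e ((h * j / N : ℝ) : ℂ) * tvT N ((j : ℝ)/N) c τ := by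
  have hτ0 : τ ≠ 0 := fun h0 => by simp [h0] at hτ
  have hn : 0 < ‖τ‖ := norm_pos_iff.mpr hτ0
  have hN' : (0:ℝ) < N := by exact_mod_cast hN
  have hN0 : (N : ℂ) ≠ 0 := by exact_mod_cast hN.ne'
  have hcj : (starRingEnd ℂ) τ ≠ 0 := by simpa using hτ0
  have him : (-1/τ).im = τ.im / ‖τ‖^2 := by
    rw [Complex.div_im]; simp [Complex.normSq_eq_norm_sq, neg_div]
  have hS := tv_im_S hτ
  have hm1 : 1/(-I*(-1/τ)) = -I*τ := by field_simp; simp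
  have hn1 : 1/(I * (starRingEnd ℂ) (-1/τ)) = I * (starRingEnd ℂ) τ := by
    rw [map_div₀, map_neg, map_one]; field_simp; simp
  have hmu := (tv_mu_re (-1/τ)).symm ▸ hS
  have hnu := (tv_nu_re (-1/τ)).symm ▸ hS
  have hkap : tvkappa N c (-I*(-1/τ)) (I * (starRingEnd ℂ) (-1/τ)) = (‖τ‖ : ℂ) / N := by
    rw [tvkappa_val hc hmu hnu (s := N/‖τ‖) (by positivity)]
    · push_cast; field_simp
    · have hmc := Complex.mul_conj' τ
      rw [map_div₀, map_neg, map_one]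
      push_cast
      rw [div_pow, ← hmc]; field_simp; simp
  have hsq : Real.sqrt (2 * (-1/τ).im) = Real.sqrt (2 * τ.im) / ‖τ‖ := by
    rw [him, ← mul_div_assoc, Real.sqrt_div (by positivity), Real.sqrt_sq hn.le]
  have hv := Real.sq_sqrt (show 0 ≤ 2 * τ.im by positivity)
  have hs0 : 0 < Real.sqrt (2 * τ.im) := Real.sqrt_pos.mpr (by positivity)
  have he : e (1/4) = I := by
    rw [e]; rw [show 2 * (Real.pi:ℂ) * I * (1/4) = (Real.pi:ℂ)/2 * I by ring, Complex.exp_pi_div_two_mul_I]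
  simp only [tvT]
  rw [tv_poisson_V hN hh hc hmu hnu, tv_poisson_W hN hh hc hmu hnu, hkap, hm1, hn1, hsq, he, ]
  rw [Finset.mul_sum, Finset.mul_sum, Finset.mul_sum, Finset.mul_sum, Finset.mul_sum, ← Finset.sum_sub_distrib]
  refine Finset.sum_congr rfl fun j _ => ?_
  have hmc := Complex.mul_conj' τ
  have hre : (starRingEnd ℂ) τ = τ - I * ((Real.sqrt (2 * τ.im) ^ 2 : ℝ) : ℂ) := by
    rw [hv]; apply Complex.ext <;> simp; ring
  have hv0 : (Real.sqrt (2 * τ.im) : ℂ) ≠ 0 := by exact_mod_cast hs0.ne'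
  have hpi : (Real.pi : ℂ) ≠ 0 := by exact_mod_cast Real.pi_ne_zero
  have hnC : (‖τ‖ : ℂ) ≠ 0 := by exact_mod_cast hn.ne'
  rw [hre] at hmc
  push_cast at hmc ⊢
  generalize (Real.sqrt (2 * τ.im) : ℂ) = s at *
  generalize (‖τ‖ : ℂ) = n at *
  generalize (∑' q, tvG N ((j : ℝ) / N) c (-I*τ) (I * (starRingEnd ℂ) τ) q) = G
  generalize (∑' q, tvV N ((j : ℝ) / N) c (-I*τ) (I * (starRingEnd ℂ) τ) q) = V
  generalize e _ = E
  have hI : I^2 = -1 := Complex.I_sq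
  have e1 : -(1 / (2 * (Real.pi:ℂ) * (-I * (-1 / τ)))) = I * τ / (2 * Real.pi) := by
    field_simp; rw [hI]
  have e2 : 1 / (-I * (-1 / τ))^2 = -τ^2 := by
    field_simp; rw [hI]; ring
  rw [e1, e2]
  field_simp
  linear_combination -(E * G) * hmc


lemma tvp_deriv {v : ℝ} (hv : 0 < v) {c : ℝ} (hc : 0 < c) (a b : ℝ) :
    HasDerivAt (fun c => tvp v c a b) ((1/c^2) * Real.exp (-2 * Real.pi * v * ((c * a - b / c) / 2)^2) *
      (2 * Real.sqrt (2 * v) * ((c * a + b / c) / 2)^2 - 1 / (Real.pi * Real.sqrt (2 * v)))) c := by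
  have hc0 := hc.ne'
  have hX : HasDerivAt (fun c : ℝ => (c * a - b / c) / 2) ((a + b / c^2) / 2) c := by
    have h1 := (((hasDerivAt_id c).mul_const a).sub ((hasDerivAt_inv hc0).const_mul b)).div_const 2
    refine (h1.congr_of_eventuallyEq (Filter.Eventually.of_forall fun y => ?_)).congr_deriv ?_
    · simp [div_eq_mul_inv]
    · simp [div_eq_mul_inv]
  have h2 := ((tv_erfc_deriv (Real.sqrt (2 * Real.pi * v) * ((c * a - b / c) / 2))).comp c (hX.const_mul (Real.sqrt (2 * Real.pi * v)))).const_sub 1 |>.const_mul a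
  have h3 := ((hX.pow 2).const_mul (-2 * Real.pi * v)).exp.div_const (Real.pi * Real.sqrt (2 * v))
  have h4 := (hasDerivAt_inv hc0).mul h3
  refine ((h2.add h4).congr_of_eventuallyEq (Filter.Eventually.of_forall fun y => ?_)).congr_deriv ?_
  · simp [tvp]
  · have hsq := tv_sqrt_sq hv ((c * a - b / c) / 2)
    rw [hsq]
    have hs : Real.sqrt (2 * Real.pi * v) = Real.sqrt Real.pi * Real.sqrt (2 * v) := by
      rw [← Real.sqrt_mul Real.pi_pos.le]; congr 1; ring
    have hspi : Real.sqrt Real.pi ≠ 0 := (Real.sqrt_pos.mpr Real.pi_pos).ne'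
    have hs0 : Real.sqrt (2 * v) ≠ 0 := (Real.sqrt_pos.mpr (by positivity)).ne'
    have hss : v = Real.sqrt (2 * v)^2 / 2 := by rw [Real.sq_sqrt (by positivity)]; ring
    have hpi := Real.pi_ne_zero
    have hex : -(2 * Real.pi * v * ((c * a - b / c) / 2)^2) = -2 * Real.pi * v * ((c * a - b / c) / 2)^2 := by ring
    simp only [Pi.pow_apply, show 2 - 1 = 1 from rfl, pow_one]
    rw [hs, hex]
    generalize hE : Real.exp (-2 * Real.pi * v * ((c * a - b / c) / 2)^2) = E
    generalize Real.sqrt (2 * v) = s at *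
    subst hss
    generalize Real.sqrt Real.pi = p at *
    field_simp
    ring

lemma tvEE_mul (N : ℕ) (h c : ℝ) (hc : 0 < c) (τ : ℂ) (q : ℤ × ℤ) :
    tvEE N h τ q * ((Real.exp (-2 * Real.pi * τ.im * ((c * tva N h q - tvb N h q / c) / 2)^2) : ℝ) : ℂ)
      = tvG N h c (-I*τ) (I * (starRingEnd ℂ) τ) q := by
  rw [tvEE, tvW, tvG, tvPsi, tvMc, tvXc, tva, tvb]
  have hc0 : (c : ℂ) ≠ 0 := by exact_mod_cast hc.ne'
  have hre : (starRingEnd ℂ) τ = τ - 2 * I * (τ.im : ℂ) := by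
    apply Complex.ext <;> simp; ring
  simp only [e]
  rw [Complex.ofReal_exp, hre, ← Complex.exp_add, ← Complex.exp_add, ← Complex.exp_add]
  congr 1
  push_cast
  generalize (τ.im : ℂ) = v
  have hI : I^2 = -1 := Complex.I_sq
  field_simp
  ring_nf
  simp only [hI]
  ring

lemma tv_theta_deriv {N : ℕ} (hN : 0 < N) (h : ℝ) {τ : ℂ} (hτ : 0 < τ.im) {c : ℝ} (hc : 0 < c) :
    HasDerivAt (fun c => ∑' q, (tvf N h τ 1 q - tvf N h τ c q)) (-(1/(c:ℂ)^2) * tvT N h c τ) c := by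
  obtain ⟨C, hC1, hcC1, hcC2⟩ : ∃ C : ℝ, 1 < C ∧ 1/C < c ∧ c < C := by
    refine ⟨c + 1/c + 1, ?_, ?_, ?_⟩
    · have : 0 < 1/c := by positivity
      linarith
    · rw [div_lt_iff₀ (by positivity)]
      have : c * (1/c) = 1 := by field_simp
      nlinarith
    · have : 0 < 1/c := by positivity
      linarith
  have hC : 0 < C := by linarith
  have hmu : 0 < (-I*τ).re := by rw [tv_mu_re]; exact hτ
  have hnu : 0 < (I * (starRingEnd ℂ) τ).re := by rw [tv_nu_re]; exact hτ
  set s := Real.sqrt (2 * τ.im) with hs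
  have hs0 : 0 < s := Real.sqrt_pos.mpr (by positivity)
  set K := 1 / (Real.pi * s) with hK
  have hK0 : 0 < K := by have := Real.pi_pos; positivity
  have hbase := tv_summable_prod_sq N hN h (show 0 < Real.pi * (τ.im/2) / C^2 by have := Real.pi_pos; positivity)
  have hVs : ∀ y : ℝ, 1/C ≤ y → y ≤ C → ∀ q, ‖tvV N h y (-I*τ) (I * (starRingEnd ℂ) τ) q‖ ≤
      (2 / (Real.pi * τ.im)) * Real.exp (-(Real.pi * (τ.im/2) / C^2) * (((N : ℝ) * q.1 + h)^2 + ((q.2 : ℝ) + 1/2)^2)) := by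
    intro y h1 h2 q
    rw [tvV_norm]
    exact tvPsi_sq_bound hC h1 h2 hτ (by rw [tv_mu_re]) (by rw [tv_nu_re])
  have hGs : ∀ y : ℝ, 1/C ≤ y → y ≤ C → ∀ q, ‖tvG N h y (-I*τ) (I * (starRingEnd ℂ) τ) q‖ ≤
      Real.exp (-(Real.pi * (τ.im/2) / C^2) * (((N : ℝ) * q.1 + h)^2 + ((q.2 : ℝ) + 1/2)^2)) := by
    intro y h1 h2 q
    rw [tvG, norm_mul, tv_eM_norm, one_mul]
    exact tvPsi_norm_le hC h1 h2 (by linarith) (by rw [tv_mu_re]; linarith) (by rw [tv_nu_re]; linarith)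
  have key := hasDerivAt_tsum_of_isPreconnected (t := Set.Ioo (1/C) C) (y₀ := 1)
    (g := fun q y => tvf N h τ 1 q - tvf N h τ y q)
    (g' := fun q y => -(1/(y:ℂ)^2) * (2 * (s : ℂ) * tvV N h y (-I*τ) (I * (starRingEnd ℂ) τ) q - (K : ℂ) * tvG N h y (-I*τ) (I * (starRingEnd ℂ) τ) q))
    (hbase.mul_left (C^2 * (2 * s * (2 / (Real.pi * τ.im)) + K)))
    isOpen_Ioo isPreconnected_Ioo ?_ ?_ (Set.mem_Ioo.mpr ⟨by rw [div_lt_one hC]; exact hC1, hC1⟩) (by simp [summable_zero]) (Set.mem_Ioo.mpr ⟨hcC1, hcC2⟩)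
  · refine key.congr_deriv ?_
    have sV : Summable (tvV N h c (-I*τ) (I * (starRingEnd ℂ) τ)) :=
      Summable.of_norm_bounded (hbase.mul_left _) (hVs c hcC1.le hcC2.le)
    have sG : Summable (tvG N h c (-I*τ) (I * (starRingEnd ℂ) τ)) :=
      Summable.of_norm_bounded hbase (hGs c hcC1.le hcC2.le)
    rw [tsum_mul_left, (sV.mul_left _).tsum_sub (sG.mul_left _), tsum_mul_left, tsum_mul_left, tvT]
  · intro q y hy
    have hy0 : 0 < y := lt_trans (by positivity) hy.1
    have h1 := (((tvp_deriv hτ hy0 (tva N h q) (tvb N h q)).sub_const (|tva N h q|)).ofReal_comp.const_mul (tvEE N h τ q)).const_sub (tvf N h τ 1 q)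
    refine h1.congr_deriv ?_
    have h2 := tvEE_mul N h y hy0 τ q
    have h3 : tvMc y ((q.2 : ℝ) + 1/2) ((N : ℝ) * q.1 + h) = (y * tva N h q + tvb N h q / y) / 2 := rfl
    rw [tvV, h3, ← h2, ← hs, ← hK]
    push_cast
    ring
  · intro q y hy
    have hy0 : 0 < y := lt_trans (by positivity) hy.1
    rw [norm_mul, mul_assoc (C^2)]
    have e1 : ‖-(1/(y:ℂ)^2)‖ ≤ C^2 := by
      rw [norm_neg, norm_div, norm_pow, Complex.norm_real, Real.norm_of_nonneg hy0.le, norm_one, ← one_div_pow]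
      have : 1/y ≤ C := by
        rw [div_le_iff₀ hy0]; have := hy.1.le; rw [div_le_iff₀ hC] at this; linarith
      gcongr
    refine mul_le_mul e1 ?_ (norm_nonneg _) (by positivity)
    refine (norm_sub_le _ _).trans ?_
    rw [norm_mul, norm_mul, norm_mul, Complex.norm_real, Complex.norm_real, Real.norm_of_nonneg hs0.le, Real.norm_of_nonneg hK0.le]
    have a1 := hVs y hy.1.le hy.2.le q
    have a2 := hGs y hy.1.le hy.2.le q
    rw [add_mul, mul_assoc (2 * s)]
    have : ‖(2:ℂ)‖ = 2 := by simp
    rw [this]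
    gcongr

lemma tvL_S {N : ℕ} (hN : 0 < N) (hNe : Even N) {h : ℝ} (hh : ∃ k : ℤ, h = (k : ℝ) / N) {τ : ℂ} (hτ : 0 < τ.im) :
    tvL N h (-1/τ) = -(I*τ^2/N) * ∑ j ∈ Finset.range (N^2), e ((h * j / N : ℝ) : ℂ) * tvL N ((j : ℝ)/N) τ := by
  have hS := tv_im_S hτ
  set Th : ℝ → ℂ → ℝ → ℂ := fun h τ c => ∑' q, (tvf N h τ 1 q - tvf N h τ c q) with hTh
  set Φ : ℝ → ℂ := fun c => Th h (-1/τ) c - (-(I*τ^2/N)) * ∑ j ∈ Finset.range (N^2), e ((h * j / N : ℝ) : ℂ) * Th ((j:ℝ)/N) τ c with hΦ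
  have hd : ∀ c : ℝ, 0 < c → HasDerivAt Φ 0 c := by
    intro c hc
    have h1 := (tv_theta_deriv hN h hS hc).sub ((HasDerivAt.fun_sum (u := Finset.range (N^2)) fun j _ =>
      (tv_theta_deriv hN ((j:ℝ)/N) hτ hc).const_mul (e ((h * j / N : ℝ) : ℂ))).const_mul (-(I*τ^2/N)))
    refine h1.congr_deriv ?_
    rw [tvT_S hN hh hc hτ, Finset.mul_sum, Finset.mul_sum, Finset.mul_sum, ← Finset.sum_sub_distrib]
    refine Finset.sum_eq_zero fun j _ => by ring
  have hΦ1 : Φ 1 = 0 := by simp [hΦ, hTh]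
  have hz : ∀ c : ℝ, 0 < c → Φ c = 0 := by
    intro c hc
    rw [← hΦ1]
    refine (convex_Ioi (0:ℝ)).is_const_of_fderivWithin_eq_zero (𝕜 := ℝ) (f := Φ) (fun y hy => (hd y hy).differentiableAt.differentiableWithinAt) (fun y hy => ?_) hc (Set.mem_Ioi.mpr one_pos)
    rw [fderivWithin_of_isOpen isOpen_Ioi hy]
    ext; simp [(hd y hy).deriv]
  have t1 : Filter.Tendsto Φ Filter.atTop (nhds (tvL N h (-1/τ) - (-(I*τ^2/N)) * ∑ j ∈ Finset.range (N^2), e ((h * j / N : ℝ) : ℂ) * tvL N ((j : ℝ)/N) τ)) := by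
    refine (tvL_tendsto hN hNe hh hS).sub ((tendsto_finset_sum _ fun j _ => ?_).const_mul _)
    exact (tvL_tendsto hN hNe ⟨(j:ℤ), by push_cast; rfl⟩ hτ).const_mul _
  have t2 : Filter.Tendsto Φ Filter.atTop (nhds 0) := by
    refine tendsto_const_nhds.congr' ?_
    filter_upwards [Filter.eventually_gt_atTop 0] with c hc
    exact (hz c hc).symm
  exact sub_eq_zero.mp (tendsto_nhds_unique t1 t2)


lemma tv_e_nat_mul (n : ℕ) (z : ℂ) : e (n * z) = (e z)^n := by
  simp only [e]; rw [← Complex.exp_nat_mul]; congr 1; ring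

lemma tv_e_quarter : e (1/4) = I := by
  rw [e]; rw [show 2 * (Real.pi:ℂ) * I * (1/4) = (Real.pi:ℂ)/2 * I by ring, Complex.exp_pi_div_two_mul_I]

lemma tv_reindex {N : ℕ} (hN : 0 < N) (hNe : Even N) (F : ℕ → ℂ) :
    ∑ j ∈ Finset.range (N^2), (if ∃ m : ℤ, ((j:ℝ)/N) = (m : ℝ) + 1/2 then F j else 0) =
      ∑ m ∈ Finset.range N, F (N * m + N/2) := by
  obtain ⟨K, rfl⟩ := hNe
  have hK : 0 < K := by omega
  have h2 : (K + K)/2 = K := by omega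
  rw [← Finset.sum_filter, h2]
  symm
  refine Finset.sum_bij (fun m _ => (K+K) * m + K) ?_ ?_ ?_ ?_
  · intro m hm
    rw [Finset.mem_range] at hm
    rw [Finset.mem_filter, Finset.mem_range]
    refine ⟨by nlinarith, (m:ℤ), ?_⟩
    have : (K:ℝ) ≠ 0 := by exact_mod_cast hK.ne'
    push_cast; field_simp; ring
  · intro a _ b _ hab
    have : (K+K) * a = (K+K) * b := by omega
    exact Nat.eq_of_mul_eq_mul_left hN this
  · intro j hj
    rw [Finset.mem_filter, Finset.mem_range] at hj
    obtain ⟨hj, m, hm⟩ := hj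
    have hK0 : (K:ℝ) ≠ 0 := by exact_mod_cast hK.ne'
    have h1 : (j:ℝ) = (K+K) * m + K := by
      push_cast at hm; field_simp at hm; linarith
    have h3 : (j:ℤ) = (K+K) * m + K := by exact_mod_cast h1
    have hm0 : 0 ≤ m := by
      by_contra hlt
      have : m ≤ -1 := by omega
      nlinarith
    lift m to ℕ using hm0
    have h4 : j = (K+K)*m+K := by exact_mod_cast h3
    refine ⟨m, ?_, h4.symm⟩
    rw [Finset.mem_range]
    by_contra hge
    push Not at hge
    nlinarith
  · intros; rfl

lemma tv_geom {N : ℕ} (hN : 0 < N) (hNe : Even N) {h : ℝ} (hh : ∃ k : ℤ, h = (k : ℝ) / N) :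
    (if ∃ m : ℤ, h = (m : ℝ) + 1/2 then e ((h : ℂ)/2) else 0) =
    -(I / N) * ∑ j ∈ Finset.range (N^2), e ((h * j / N : ℝ) : ℂ) *
      (if ∃ m : ℤ, ((j:ℝ)/N) = (m : ℝ) + 1/2 then e ((((j:ℝ)/N : ℝ) : ℂ) / 2) else 0) := by
  have hN0 : (N : ℂ) ≠ 0 := by exact_mod_cast hN.ne'
  have hNr : (N : ℝ) ≠ 0 := by exact_mod_cast hN.ne'
  simp only [mul_ite, mul_zero]
  rw [tv_reindex hN hNe (fun j => e ((h * j / N : ℝ) : ℂ) * e ((((j:ℝ)/N : ℝ) : ℂ) / 2))]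
  have hterm : ∀ m ∈ Finset.range N, e ((h * (N * m + N/2 : ℕ) / N : ℝ) : ℂ) * e (((((N * m + N/2 : ℕ):ℝ)/N : ℝ) : ℂ) / 2)
      = e (h/2) * I * (e ((h:ℂ) + 1/2))^m := by
    intro m _
    rw [← tv_e_nat_mul, ← tv_e_quarter, ← tv_e_add, ← tv_e_add, ← tv_e_add]
    congr 1
    obtain ⟨K, rfl⟩ := hNe
    have h2 : (K + K)/2 = K := by omega
    have hK : (K:ℂ) ≠ 0 := by intro h0; apply hN0; push_cast; rw [h0]; simp
    rw [h2]; push_cast; field_simp; ring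
  rw [Finset.sum_congr rfl hterm, ← Finset.mul_sum]
  split_ifs with hc
  · obtain ⟨k, hk⟩ := hc
    have : e ((h:ℂ) + 1/2) = 1 := by
      rw [hk, show (((k:ℝ) + 1/2 : ℝ) : ℂ) + 1/2 = ((k+1 : ℤ) : ℂ) by push_cast; ring, tv_e_int]
    rw [this]
    simp only [one_pow, Finset.sum_const, Finset.card_range, nsmul_eq_mul, mul_one]
    field_simp
    rw [Complex.I_sq]; ring
  · have hz : e ((h:ℂ) + 1/2) ≠ 1 := by
      intro h1
      rw [e, Complex.exp_eq_one_iff] at h1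
      obtain ⟨n, hn⟩ := h1
      apply hc
      refine ⟨n - 1, ?_⟩
      have hp : (2 * (Real.pi:ℂ) * I) ≠ 0 := Complex.two_pi_I_ne_zero
      rw [mul_comm] at hn
      have h2 := mul_right_cancel₀ hp hn
      have h3 : h + 1/2 = (n:ℝ) := by
        have := congrArg Complex.re h2
        simpa using this
      push_cast; linarith
    have hzN : (e ((h:ℂ) + 1/2))^N = 1 := by
      obtain ⟨k, hk⟩ := hh
      obtain ⟨K, hK⟩ := hNe
      rw [← tv_e_nat_mul]
      have : (N:ℂ) * ((h:ℂ) + 1/2) = ((k + K : ℤ) : ℂ) := by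
        have h1 : (N:ℂ) * h = k := by rw [hk]; push_cast; field_simp
        have h2 : (N:ℂ) = K + K := by rw [hK]; push_cast; ring
        rw [mul_add, h1, h2]; push_cast; ring
      rw [this, tv_e_int]
    rw [geom_sum_eq hz, hzN]; simp

noncomputable def tvA (N : ℕ) (h : ℝ) (τ : ℂ) : ℂ :=
  tvL N h τ + (if ∃ m : ℤ, h = (m : ℝ) + 1/2 then e ((h : ℂ)/2) else 0) * (tvE2s τ / (6 * N))

lemma tvtheta_eq {N : ℕ} (hN : 0 < N) (h : ℝ) {τ : ℂ} (hτ : 0 < τ.im) :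
    tvtheta N h τ = tvA N h τ / (2 * I * eta3 τ) := by
  have hη := tv_eta3_ne hτ
  have hN0 : (N : ℂ) ≠ 0 := by exact_mod_cast hN.ne'
  have hv : (τ.im : ℂ) ≠ 0 := by exact_mod_cast hτ.ne'
  have hpi : (Real.pi : ℂ) ≠ 0 := by exact_mod_cast Real.pi_ne_zero
  rw [tvtheta, tvA, tvL, tvE2s]
  split_ifs <;> field_simp <;> ring

lemma tvA_S {N : ℕ} (hN : 0 < N) (hNe : Even N) {h : ℝ} (hh : ∃ k : ℤ, h = (k : ℝ) / N) {τ : ℂ} (hτ : 0 < τ.im) :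
    tvA N h (-1/τ) = -(I*τ^2/N) * ∑ j ∈ Finset.range (N^2), e ((h * j / N : ℝ) : ℂ) * tvA N ((j : ℝ)/N) τ := by
  simp only [tvA]
  rw [tvL_S hN hNe hh hτ, tvE2s_S hτ, tv_geom hN hNe hh, Finset.mul_sum, Finset.mul_sum, Finset.mul_sum, Finset.sum_mul, ← Finset.sum_add_distrib]
  refine Finset.sum_congr rfl fun j _ => ?_
  ring

lemma tv_sqrt_rot {τ : ℂ} (hτ : 0 < τ.im) : (-I*τ)^(1/2 : ℂ) * e (1/8) = τ^(1/2 : ℂ) := by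
  have hτ0 : τ ≠ 0 := fun h0 => by simp [h0] at hτ
  have h1 : 0 ≤ τ.arg := Complex.arg_nonneg_iff.mpr hτ.le
  have h2 := Complex.arg_le_pi τ
  have hpi := Real.pi_pos
  have hl : Complex.log (-I*τ) = Complex.log (-I) + Complex.log τ := by
    apply Complex.log_mul (by simp) hτ0
    rw [Complex.arg_neg_I]
    constructor <;> linarith
  rw [Complex.cpow_def_of_ne_zero hτ0, Complex.cpow_def_of_ne_zero (by simpa using hτ0), hl, Complex.log_neg_I, e, ← Complex.exp_add]
  congr 1; ring

/-- the transformation of `ϑ̃_{N,h}` under `τ ↦ -1/τ`. -/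
theorem tvtheta_inversion (N : ℕ) (hN : 0 < N) (hNe : Even N) (h : ℝ)
    (hh : ∃ k : ℤ, h = (k : ℝ) / N) (τ : ℂ) (hτ : 0 < τ.im) :
    τ ^ (-(1/2) : ℂ) * tvtheta N h (-1/τ) =
      e ((1:ℂ)/8) / N *
        ∑ j ∈ Finset.range (N^2), e (((h * j / N : ℝ) : ℂ)) * tvtheta N ((j : ℝ) / N) τ := by
  have hS := tv_im_S hτ
  have hτ0 : τ ≠ 0 := fun h0 => by simp [h0] at hτ
  have hη := tv_eta3_ne hτ
  have hη' := tv_eta3_ne hS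
  have hN0 : (N : ℂ) ≠ 0 := by exact_mod_cast hN.ne'
  rw [tvtheta_eq hN h hS, tvA_S hN hNe hh hτ]
  simp only [fun j : ℕ => tvtheta_eq hN ((j:ℝ)/N) hτ]
  have hsum : ∑ j ∈ Finset.range (N^2), e (((h * j / N : ℝ) : ℂ)) * (tvA N ((j : ℝ) / N) τ / (2 * I * eta3 τ))
     = (∑ j ∈ Finset.range (N^2), e (((h * j / N : ℝ) : ℂ)) * tvA N ((j : ℝ) / N) τ) / (2 * I * eta3 τ) := by
    rw [Finset.sum_div]; refine Finset.sum_congr rfl fun j _ => by ring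
  rw [hsum]
  generalize (∑ j ∈ Finset.range (N^2), e (((h * j / N : ℝ) : ℂ)) * tvA N ((j : ℝ) / N) τ) = A
  have h1 := tv_eta3_S hτ
  have h2 := tv_sqrt_rot hτ
  have h3 := tv_csq hτ0
  have h4 : τ ^ (-(1/2) : ℂ) = (τ^(1/2 : ℂ))⁻¹ := Complex.cpow_neg _ _
  have hs : (-I*τ)^(1/2 : ℂ) ≠ 0 := by
    rw [Complex.cpow_ne_zero_iff]; left; simpa using hτ0
  have hr : τ^(1/2 : ℂ) ≠ 0 := by
    rw [Complex.cpow_ne_zero_iff]; left; exact hτ0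
  have he := tv_e_ne (1/8)
  rw [h4, h1]
  generalize eta3 (-1/τ) = η' at *
  generalize (-I*τ)^(1/2 : ℂ) = s at *
  generalize τ^(1/2 : ℂ) = r at *
  generalize e (1/8) = ε at *
  have hI : I^2 = -1 := Complex.I_sq
  clear h1 hη hsum h4
  have hIi : I⁻¹ = -I := Complex.inv_I
  rw [← h2] at h3
  field_simp
  rw [hI, ← h2]
  linear_combination (-A) * h3
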